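/- arXiv:2106.02866 — 8 statements merged into one kernel-verified Lean document; each statement's English description precedes it below -/
import Mathlib

section
/- Let α be a measurable space and let P and Q be probability measures on α. Let f : α → ℝ be a measurable function that is integrable with respect to P and such that a ↦ Real.exp (f a) is integrable with respect to Q. Then ENNReal.ofReal ((∫ a, f a ∂P) - (∫ a, Real.exp (f a) ∂Q) + 1) ≤ KL(P‖Q). -/
/-!
The bound is Young's inequality for the convex function `r ↦ r log r`, whose conjugate is
`y ↦ exp (y - 1)`. In shifted form it reads `r y - exp y + r ≤ r log r` for `r ≥ 0`. Taking
`r = dP/dQ` and `y = f`, and integrating against `Q`, the terms become `∫ f ∂P`, `∫ exp f ∂Q`,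
`P univ = 1` and `∫ llr P Q ∂P` by change of measure. If `P` is not absolutely continuous with
respect to `Q`, or the log-likelihood ratio is not integrable, the divergence is `∞`.
-/


open MeasureTheory ProbabilityTheory
open scoped ENNReal

open Classical in
/-- The Kullback–Leibler divergence valued in `[0, ∞]`. -/
noncomputable def klDiv {α : Type*} [MeasurableSpace α] (P Q : Measure α) : ℝ≥0∞ :=
  if P ≪ Q ∧ Integrable (llr P Q) P then ENNReal.ofReal (∫ a, llr P Q a ∂P) else ⊤

/-- Young's inequality for `r log r`; at `r = 0` it holds with `Real.log 0 = 0`. -/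
lemma mul_sub_exp_add_le_mul_log {r : ℝ} (hr : 0 ≤ r) (y : ℝ) :
    r * y - Real.exp y + r ≤ r * Real.log r := by
  rcases hr.eq_or_lt with rfl | hr
  · simp [Real.exp_nonneg]
  -- Multiply `t + 1 ≤ exp t` at `t = y - log r` by `r`.
  have h := mul_le_mul_of_nonneg_left (Real.add_one_le_exp (y - Real.log r)) hr.le
  rw [Real.exp_sub, Real.exp_log hr, mul_div_cancel₀ _ hr.ne'] at h
  linarith

/-- Lower-bound direction of the Nguyen–Wainwright–Jordan variational representation of
the KL divergence (Lemma A.1). -/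
theorem stmt_0 {α : Type*} [MeasurableSpace α] (P Q : Measure α)
    [IsProbabilityMeasure P] [IsProbabilityMeasure Q]
    (f : α → ℝ) (hf : Measurable f)
    (hfP : Integrable f P) (hfQ : Integrable (fun a => Real.exp (f a)) Q) :
    ENNReal.ofReal ((∫ a, f a ∂P) - (∫ a, Real.exp (f a) ∂Q) + 1) ≤ klDiv P Q := by
  unfold klDiv
  split_ifs with h
  swap
  · exact le_top
  obtain ⟨hPQ, hllr⟩ := h
  apply ENNReal.ofReal_le_ofReal
  have hrf : Integrable (fun a => (P.rnDeriv Q a).toReal * f a) Q :=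
    (integrable_rnDeriv_smul_iff hPQ).mpr hfP
  have hrlog : Integrable
      (fun a => (P.rnDeriv Q a).toReal * Real.log (P.rnDeriv Q a).toReal) Q :=
    (integrable_rnDeriv_smul_iff hPQ).mpr hllr
  have hr : Integrable (fun a => (P.rnDeriv Q a).toReal) Q :=
    Measure.integrable_toReal_rnDeriv
  have hrf_eq : ∫ a, (P.rnDeriv Q a).toReal * f a ∂Q = ∫ a, f a ∂P :=
    integral_rnDeriv_smul hPQ
  have hrlog_eq : ∫ a, (P.rnDeriv Q a).toReal * Real.log (P.rnDeriv Q a).toReal ∂Q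
      = ∫ a, llr P Q a ∂P :=
    integral_rnDeriv_smul hPQ
  have hr_eq : ∫ a, (P.rnDeriv Q a).toReal ∂Q = 1 := by
    rw [Measure.integral_toReal_rnDeriv hPQ, probReal_univ]
  have hdiff : Integrable (fun a => (P.rnDeriv Q a).toReal * f a - Real.exp (f a)) Q :=
    hrf.sub hfQ
  rw [← hrf_eq, ← hrlog_eq, ← hr_eq, ← integral_sub hrf hfQ, ← integral_add hdiff hr]
  exact integral_mono (hdiff.add hr) hrlog
    fun a => mul_sub_exp_add_le_mul_log ENNReal.toReal_nonneg (f a)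
end

section
/- Let α be a measurable space and let P and Q be probability measures on α. Then KL(P‖Q) = ⨆ over all f : α → ℝ that are measurable and bounded (i.e., Measurable f and ∃ C, ∀ a, |f a| ≤ C) of ENNReal.ofReal ((∫ a, f a ∂P) - (∫ a, Real.exp (f a) ∂Q) + 1), the supremum taken in [0,∞]. -/
/-!
For `P ≪ Q` put `r = (dP/dQ).toReal`. Then
* `KL(P‖Q) = ∫⁻ ofReal (klFun r) ∂Q` with `klFun r = r log r + 1 - r`
  (`klDiv_eq_mathlib_klDiv` and `InformationTheory.klDiv_eq_lintegral_klFun_of_ac`), whether or not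
  this is finite;
* the objective at a bounded critic `f` is `∫ (r f - exp f + 1) ∂Q` (`objective_eq`).

Pointwise, `y ↦ r y - exp y + 1` is at most `klFun r`, with equality at `y = log r` when `r > 0`
(`mul_sub_exp_add_one_le`). Integrating gives `≥`. For `≤`, the critics are the truncations of
`log r` to `[-n, n]`, with value `-n` where `r = 0`. Since truncation keeps a value between `0` and
`log r`, the corresponding integrands are nonnegative (`truncLog_integrand_nonneg`); they converge
pointwise to `klFun r`, and Fatou's lemma concludes.

If `P` is not absolutely continuous with respect to `Q`, choose `s` with `Q s = 0 < P s`: the critics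
`n · 1_s` have objective `n P(s)`, which is unbounded.
-/

open MeasureTheory ProbabilityTheory
open scoped ENNReal

open Filter Topology
open InformationTheory hiding klDiv

/-- For probability measures, the mass correction in Mathlib's divergence vanishes. -/
lemma klDiv_eq_mathlib_klDiv {α : Type*} [MeasurableSpace α] (P Q : Measure α)
    [IsProbabilityMeasure P] [IsProbabilityMeasure Q] :
    _root_.klDiv P Q = InformationTheory.klDiv P Q := by
  rw [InformationTheory.klDiv_def, _root_.klDiv]
  simp

/-- Fenchel–Young inequality for the conjugate pair `klFun` and `y ↦ exp y - 1`. -/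
lemma mul_sub_exp_add_one_le {r : ℝ} (hr : 0 ≤ r) (y : ℝ) :
    r * y - Real.exp y + 1 ≤ klFun r := by
  rw [klFun_apply]
  rcases hr.eq_or_lt with rfl | hr
  · have := Real.exp_pos y
    simp only [zero_mul]
    linarith
  · have h1 := Real.add_one_le_exp (y - Real.log r)
    have h2 : Real.exp y = r * Real.exp (y - Real.log r) := by
      rw [Real.exp_sub, Real.exp_log hr]
      field_simp
    rw [h2]
    nlinarith [mul_le_mul_of_nonneg_left h1 hr.le]

/-- The logarithm truncated to `[-n, n]`, with `log 0` read as `-∞` (so the value at `0` is `-n`)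
rather than as the default value `0` of `Real.log`. -/
noncomputable def truncLog (n : ℕ) (r : ℝ) : ℝ :=
  if r = 0 then -n else max (-n) (min n (Real.log r))

lemma measurable_truncLog (n : ℕ) : Measurable (truncLog n) := by
  unfold truncLog
  exact Measurable.ite (measurableSet_singleton 0) measurable_const
    (measurable_const.max (measurable_const.min Real.measurable_log))

lemma abs_truncLog_le (n : ℕ) (r : ℝ) : |truncLog n r| ≤ n := by
  have hn : (0 : ℝ) ≤ n := n.cast_nonneg
  unfold truncLog
  split_ifs
  · simp
  · rw [abs_le]
    exact ⟨le_max_left _ _, max_le (by linarith) (min_le_left _ _)⟩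

lemma truncLog_integrand_nonneg (n : ℕ) {r : ℝ} (hr : 0 ≤ r) :
    0 ≤ r * truncLog n r - Real.exp (truncLog n r) + 1 := by
  have hn : (0 : ℝ) ≤ n := n.cast_nonneg
  set y := truncLog n r with hy
  -- `y` lies between `0` and `log r`, so replacing `r` by `exp y` only decreases `r * y`.
  have key : 0 ≤ (r - Real.exp y) * y := by
    rcases hr.eq_or_lt with rfl | hr
    · have hy0 : y ≤ 0 := by simp [hy, truncLog]
      nlinarith [Real.exp_pos y]
    · have hy' : y = max (-(n : ℝ)) (min n (Real.log r)) := by simp [hy, truncLog, hr.ne']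
      rcases le_total 0 (Real.log r) with h | h
      · have h0 : 0 ≤ y := hy' ▸ le_max_of_le_right (le_min hn h)
        have h1 : y ≤ Real.log r := hy' ▸ max_le (by linarith) (min_le_right _ _)
        exact mul_nonneg (sub_nonneg.2 ((Real.le_log_iff_exp_le hr).1 h1)) h0
      · have h0 : y ≤ 0 := hy' ▸ max_le (by linarith) ((min_le_right _ _).trans h)
        have h1 : Real.log r ≤ y := hy' ▸ le_max_of_le_right (le_min (h.trans hn) le_rfl)
        exact mul_nonneg_of_nonpos_of_nonpos
          (sub_nonpos.2 ((Real.log_le_iff_le_exp hr).1 h1)) h0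
  have h2 := klFun_nonneg (Real.exp_pos y).le
  rw [klFun_apply, Real.log_exp] at h2
  linarith

lemma tendsto_truncLog_integrand {r : ℝ} (hr : 0 ≤ r) :
    Tendsto (fun n : ℕ ↦ r * truncLog n r - Real.exp (truncLog n r) + 1) atTop
      (𝓝 (klFun r)) := by
  rcases hr.eq_or_lt with rfl | hr
  · have h : Tendsto (fun n : ℕ ↦ Real.exp (-(n : ℝ))) atTop (𝓝 0) :=
      Real.tendsto_exp_neg_atTop_nhds_zero.comp tendsto_natCast_atTop_atTop
    simpa [truncLog, klFun_zero] using h.neg.add_const 1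
  · obtain ⟨N, hN⟩ := exists_nat_ge |Real.log r|
    refine tendsto_const_nhds.congr' ?_
    filter_upwards [eventually_ge_atTop N] with n hn
    have hn' : |Real.log r| ≤ n := hN.trans (by exact_mod_cast hn)
    have : truncLog n r = Real.log r := by
      rw [truncLog, if_neg hr.ne', min_eq_right (abs_le.1 hn').2, max_eq_right (abs_le.1 hn').1]
    rw [this, Real.exp_log hr, klFun_apply]
    ring

section Objective

variable {α : Type*} [MeasurableSpace α] {P Q : Measure α}
  [IsProbabilityMeasure P] [IsProbabilityMeasure Q] {f : α → ℝ}

lemma integrable_of_measurable_bounded (μ : Measure α) [IsFiniteMeasure μ]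
    (hf : Measurable f) (hb : ∃ C, ∀ a, |f a| ≤ C) : Integrable f μ := by
  obtain ⟨C, hC⟩ := hb
  exact Integrable.of_bound hf.aestronglyMeasurable C (ae_of_all _ hC)

lemma integrable_exp_of_measurable_bounded (μ : Measure α) [IsFiniteMeasure μ]
    (hf : Measurable f) (hb : ∃ C, ∀ a, |f a| ≤ C) :
    Integrable (fun a ↦ Real.exp (f a)) μ := by
  obtain ⟨C, hC⟩ := hb
  refine integrable_of_measurable_bounded μ hf.exp ⟨Real.exp C, fun a ↦ ?_⟩
  rw [Real.abs_exp]
  exact Real.exp_le_exp.2 ((le_abs_self _).trans (hC a))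

lemma integrable_integrand (hPQ : P ≪ Q) (hf : Measurable f) (hb : ∃ C, ∀ a, |f a| ≤ C) :
    Integrable (fun a ↦ (P.rnDeriv Q a).toReal * f a - Real.exp (f a) + 1) Q :=
  (((integrable_rnDeriv_smul_iff hPQ).2 (integrable_of_measurable_bounded P hf hb)).sub
    (integrable_exp_of_measurable_bounded Q hf hb)).add (integrable_const 1)

lemma objective_eq (hPQ : P ≪ Q) (hf : Measurable f) (hb : ∃ C, ∀ a, |f a| ≤ C) :
    (∫ a, f a ∂P) - (∫ a, Real.exp (f a) ∂Q) + 1 =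
      ∫ a, ((P.rnDeriv Q a).toReal * f a - Real.exp (f a) + 1) ∂Q := by
  have h1 : Integrable (fun a ↦ (P.rnDeriv Q a).toReal * f a) Q :=
    (integrable_rnDeriv_smul_iff hPQ).2 (integrable_of_measurable_bounded P hf hb)
  have h2 := integrable_exp_of_measurable_bounded Q hf hb
  have h3 : ∫ a, (P.rnDeriv Q a).toReal * f a ∂Q = ∫ a, f a ∂P := integral_rnDeriv_smul hPQ
  have h12 : Integrable (fun a ↦ (P.rnDeriv Q a).toReal * f a - Real.exp (f a)) Q := h1.sub h2
  rw [integral_add h12 (integrable_const 1), integral_sub h1 h2, h3]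
  simp

lemma iSup_objective_eq_top (hPQ : ¬ P ≪ Q) :
    ⨆ (f : α → ℝ) (_ : Measurable f ∧ ∃ C, ∀ a, |f a| ≤ C),
      ENNReal.ofReal ((∫ a, f a ∂P) - (∫ a, Real.exp (f a) ∂Q) + 1) = ⊤ := by
  obtain ⟨s, hs, hQs, hPs⟩ : ∃ s, MeasurableSet s ∧ Q s = 0 ∧ P s ≠ 0 := by
    by_contra! h
    exact hPQ (Measure.AbsolutelyContinuous.mk h)
  rw [← top_le_iff, ← ENNReal.top_mul hPs, ← ENNReal.iSup_natCast, ENNReal.iSup_mul]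
  refine iSup_le fun n ↦ ?_
  refine le_iSup₂_of_le (s.indicator fun _ ↦ (n : ℝ))
    ⟨measurable_const.indicator hs, n, fun a ↦ ?_⟩ ?_
  · by_cases ha : a ∈ s <;> simp [ha]
  · have h1 : ∫ a, Real.exp (s.indicator (fun _ ↦ (n : ℝ)) a) ∂Q = 1 := by
      have : (fun a ↦ Real.exp (s.indicator (fun _ ↦ (n : ℝ)) a)) =ᵐ[Q] fun _ ↦ 1 := by
        filter_upwards [measure_eq_zero_iff_ae_notMem.1 hQs] with a ha
        simp [ha]
      rw [integral_congr_ae this]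
      simp
    rw [h1, integral_indicator_const _ hs, sub_add_cancel, smul_eq_mul,
      ENNReal.ofReal_mul measureReal_nonneg, ofReal_measureReal, ENNReal.ofReal_natCast, mul_comm]

end Objective

/-- Full variational (supremum) characterization of the KL divergence (Lemma A.1). -/
theorem stmt_1 {α : Type*} [MeasurableSpace α] (P Q : Measure α)
    [IsProbabilityMeasure P] [IsProbabilityMeasure Q] :
    klDiv P Q =
      ⨆ (f : α → ℝ) (_ : Measurable f ∧ ∃ C, ∀ a, |f a| ≤ C),
        ENNReal.ofReal ((∫ a, f a ∂P) - (∫ a, Real.exp (f a) ∂Q) + 1) := by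
  rw [klDiv_eq_mathlib_klDiv]
  by_cases hPQ : P ≪ Q
  swap
  · rw [iSup_objective_eq_top hPQ, InformationTheory.klDiv_of_not_ac hPQ]
  rw [klDiv_eq_lintegral_klFun_of_ac hPQ]
  set r : α → ℝ := fun a ↦ (P.rnDeriv Q a).toReal with hr_def
  have hr : Measurable r := (Measure.measurable_rnDeriv P Q).ennreal_toReal
  have hr0 (a : α) : 0 ≤ r a := ENNReal.toReal_nonneg
  apply le_antisymm
  · set f : ℕ → α → ℝ := fun n a ↦ truncLog n (r a)
    set g : ℕ → α → ℝ := fun n a ↦ r a * f n a - Real.exp (f n a) + 1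
    have hf (n : ℕ) : Measurable (f n) := (measurable_truncLog n).comp hr
    have hfb (n : ℕ) : ∃ C, ∀ a, |f n a| ≤ C := ⟨n, fun a ↦ abs_truncLog_le n (r a)⟩
    have hg (n : ℕ) : Measurable (g n) := ((hr.mul (hf n)).sub (hf n).exp).add_const 1
    calc ∫⁻ a, ENNReal.ofReal (klFun (r a)) ∂Q
        = ∫⁻ a, liminf (fun n ↦ ENNReal.ofReal (g n a)) atTop ∂Q :=
          lintegral_congr fun a ↦
            (ENNReal.tendsto_ofReal (tendsto_truncLog_integrand (hr0 a))).liminf_eq.symm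
      _ ≤ liminf (fun n ↦ ∫⁻ a, ENNReal.ofReal (g n a) ∂Q) atTop :=
          lintegral_liminf_le fun n ↦ (hg n).ennreal_ofReal
      _ ≤ _ := by
          refine liminf_le_of_le (by isBoundedDefault) fun b hb ↦ ?_
          obtain ⟨n, hn⟩ := hb.exists
          refine hn.trans (le_iSup₂_of_le (f n) ⟨hf n, hfb n⟩ ?_)
          rw [objective_eq hPQ (hf n) (hfb n),
            ofReal_integral_eq_lintegral_ofReal (integrable_integrand hPQ (hf n) (hfb n))
              (ae_of_all _ fun a ↦ truncLog_integrand_nonneg n (hr0 a))]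
  · refine iSup₂_le fun f ⟨hf, hfb⟩ ↦ ?_
    rw [objective_eq hPQ hf hfb]
    calc _ ≤ ∫⁻ a, ENNReal.ofReal (r a * f a - Real.exp (f a) + 1) ∂Q := by
          refine ENNReal.ofReal_le_of_le_toReal ?_
          rw [integral_eq_lintegral_pos_part_sub_lintegral_neg_part
            (integrable_integrand hPQ hf hfb)]
          exact sub_le_self _ ENNReal.toReal_nonneg
      _ ≤ _ := lintegral_mono fun a ↦
          ENNReal.ofReal_le_ofReal (mul_sub_exp_add_one_le (hr0 a) (f a))
end

section
/- Let X and Y be measurable spaces, ρ a probability measure on X, ν a probability measure on Y, n ≥ 1 a natural number, and f : X × Y → ℝ a measurable function. Then ∫ (x, y) in X × (Fin n → Y), Real.exp (f (x, y 0)) / ((1/n) * ∑ j : Fin n, Real.exp (f (x, y j))) ∂(ρ.prod (Measure.pi (fun _ : Fin n => ν))) = 1. -/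
/-! The softmax weights `w i = exp (f (x, y i)) / ∑ j, exp (f (x, y j))` lie in `[0, 1]`, hence are
integrable, and they sum to `1` pointwise. The product measure is invariant under permutations of
the coordinates, so all the `w i` have the same expectation, which is therefore `1 / n`. The
integrand of the theorem is `n * w 0`. -/

open MeasureTheory ProbabilityTheory
open scoped ENNReal

/-- The softmax weight of the `i`-th sample among `y 0, …, y (n - 1)`, with scores `f (x, y j)`. -/
noncomputable def softmaxWeight {X Y : Type*} {n : ℕ} (f : X × Y → ℝ) (i : Fin n)
    (p : X × (Fin n → Y)) : ℝ :=
  Real.exp (f (p.1, p.2 i)) / ∑ j : Fin n, Real.exp (f (p.1, p.2 j))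

lemma sum_exp_pos {X Y : Type*} {n : ℕ} (f : X × Y → ℝ) (i : Fin n) (p : X × (Fin n → Y)) :
    0 < ∑ j : Fin n, Real.exp (f (p.1, p.2 j)) :=
  Finset.sum_pos (fun _ _ => Real.exp_pos _) ⟨i, Finset.mem_univ i⟩

lemma integrable_softmaxWeight {X Y : Type*} [MeasurableSpace X] [MeasurableSpace Y] {n : ℕ}
    (μ : Measure (X × (Fin n → Y))) [IsFiniteMeasure μ] (f : X × Y → ℝ) (hf : Measurable f)
    (i : Fin n) : Integrable (softmaxWeight f i) μ := by
  refine Integrable.of_bound (C := 1) ?_ (ae_of_all _ fun p => ?_)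
  · unfold softmaxWeight
    exact Measurable.aestronglyMeasurable (by fun_prop)
  · have hpos := sum_exp_pos f i p
    rw [softmaxWeight, Real.norm_of_nonneg (by positivity), div_le_one hpos]
    exact Finset.single_le_sum (f := fun j => Real.exp (f (p.1, p.2 j)))
      (fun _ _ => (Real.exp_pos _).le) (Finset.mem_univ i)

/-- Exchangeability of the samples: permuting the coordinates preserves the product measure and
carries one softmax weight to another. -/
lemma integral_softmaxWeight_perm {X Y : Type*} [MeasurableSpace X] [MeasurableSpace Y] {n : ℕ}
    (ρ : Measure X) [IsProbabilityMeasure ρ] (ν : Measure Y) [IsProbabilityMeasure ν]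
    (f : X × Y → ℝ) (σ : Equiv.Perm (Fin n)) (i : Fin n) :
    ∫ p, softmaxWeight f (σ i) p ∂(ρ.prod (Measure.pi (fun _ : Fin n => ν))) =
      ∫ p, softmaxWeight f i p ∂(ρ.prod (Measure.pi (fun _ : Fin n => ν))) := by
  let e := MeasurableEquiv.piCongrLeft (fun _ : Fin n => Y) σ
  have he : MeasurePreserving e (Measure.pi (fun _ : Fin n => ν))
      (Measure.pi (fun _ : Fin n => ν)) :=
    measurePreserving_piCongrLeft (fun _ : Fin n => ν) σ
  have hT : MeasurePreserving ((MeasurableEquiv.refl X).prodCongr e)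
      (ρ.prod (Measure.pi (fun _ : Fin n => ν))) (ρ.prod (Measure.pi (fun _ : Fin n => ν))) :=
    (MeasurePreserving.id ρ).prod he
  rw [← hT.integral_comp']
  refine integral_congr_ae (ae_of_all _ fun p => ?_)
  have h1 : ∀ j, e p.2 (σ j) = p.2 j := fun j =>
    Equiv.piCongrLeft_apply_apply (fun _ : Fin n => Y) σ p.2 j
  change Real.exp (f (p.1, e p.2 (σ i))) / ∑ j : Fin n, Real.exp (f (p.1, e p.2 j)) =
    Real.exp (f (p.1, p.2 i)) / ∑ j : Fin n, Real.exp (f (p.1, p.2 j))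
  rw [← Equiv.sum_comp σ (fun j => Real.exp (f (p.1, e p.2 j)))]
  simp only [h1]

/-- Exchangeability identity: when the positive sample is replaced by a draw from the
negative-sample distribution, the expected exponentiated contrastive ratio equals 1. -/
theorem stmt_2 {X Y : Type*} [MeasurableSpace X] [MeasurableSpace Y]
    (ρ : Measure X) [IsProbabilityMeasure ρ] (ν : Measure Y) [IsProbabilityMeasure ν]
    (n : ℕ) (hn : 1 ≤ n) (f : X × Y → ℝ) (hf : Measurable f) :
    ∫ p : X × (Fin n → Y),
        Real.exp (f (p.1, p.2 ⟨0, hn⟩)) / (((1 : ℝ) / n) * ∑ j : Fin n, Real.exp (f (p.1, p.2 j)))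
      ∂(ρ.prod (Measure.pi (fun _ : Fin n => ν))) = 1 := by
  set μ := ρ.prod (Measure.pi (fun _ : Fin n => ν)) with hμ
  let z : Fin n := ⟨0, hn⟩
  have hn0 : (n : ℝ) ≠ 0 := by
    have : n ≠ 0 := by omega
    exact_mod_cast this
  have hsum : ∑ i : Fin n, ∫ p, softmaxWeight f i p ∂μ = 1 := by
    rw [← integral_finsetSum _ fun i _ => integrable_softmaxWeight μ f hf i]
    have h1 : ∀ p : X × (Fin n → Y), ∑ i : Fin n, softmaxWeight f i p = 1 := fun p => by
      simp only [softmaxWeight]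
      rw [← Finset.sum_div, div_self (sum_exp_pos f z p).ne']
    simp [h1]
  have heq : ∀ i : Fin n, ∫ p, softmaxWeight f i p ∂μ = ∫ p, softmaxWeight f z p ∂μ := fun i => by
    simpa using integral_softmaxWeight_perm ρ ν f (Equiv.swap z i) z
  have hint : ∀ p : X × (Fin n → Y),
      Real.exp (f (p.1, p.2 ⟨0, hn⟩)) /
        (((1 : ℝ) / n) * ∑ j : Fin n, Real.exp (f (p.1, p.2 j))) = n * softmaxWeight f z p :=
    fun p => by
      have := (sum_exp_pos f z p).ne'
      simp only [softmaxWeight, z]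
      field_simp
  simp only [hint, integral_const_mul]
  simpa [heq] using hsum
end

section
/- Let X and Y be measurable spaces, P a probability measure on X × Y, ρ a probability measure on X, ν a probability measure on Y, n ≥ 1 a natural number, and f : X × Y → ℝ a measurable and bounded function (∃ C, ∀ p, |f p| ≤ C). Then ENNReal.ofReal ( ∫ (x, y) ∂P, ∫ w ∂(Measure.pi (fun _ : Fin (n-1) => ν)), Real.log ( Real.exp (f (x, y)) / ((1/n) * (Real.exp (f (x, y)) + ∑ j : Fin (n-1), Real.exp (f (x, w j)))) ) ) ≤ KL(P ‖ ρ.prod ν). -/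
/-!
The bound is the Donsker–Varadhan inequality `∫ G dP ≤ KL(P‖Q) + log ∫ exp G dQ` for
`Q = ρ ⊗ ν` (`integral_le_integral_llr_add_log`), applied to the function
`G (x, y) = ∫ log r(x, y, w) dν^{n-1}(w)`, where `r = n e^{f(x,y)} / (e^{f(x,y)} + ∑ e^{f(x,w j)})`.

The logarithmic term is at most `0`. Jensen's inequality gives `exp G (x, y) ≤ ∫ r(x, y, w) dν^{n-1}(w)`,
and for fixed `x` the integral of `r` over `(y, w)`, distributed as `ν^n`, is `1`
(`integral_contrastRatio`): by exchangeability of the coordinates each of the `n` softmax weights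
`e^{f(x, z i)} / ∑ j, e^{f(x, z j)}` has the same mean, and these weights sum to `1`.

Boundedness of `f` makes `r` bounded above and bounded away from `0`, so every integral involved is
that of a bounded measurable function.
-/

open MeasureTheory ProbabilityTheory
open scoped ENNReal

/-- The score ratio of a positive weight `a` against the average of `a` and the `m` negative
weights `b j`. -/
noncomputable def contrastRatio (m : ℕ) (a : ℝ) (b : Fin m → ℝ) : ℝ :=
  a / ((1 : ℝ) / ((m + 1 : ℕ) : ℝ) * (a + ∑ j, b j))

lemma contrastRatio_eq (m : ℕ) (a : ℝ) (b : Fin m → ℝ) :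
    contrastRatio m a b = ((m : ℝ) + 1) * (a / (a + ∑ j, b j)) := by
  have : (m : ℝ) + 1 ≠ 0 := by positivity
  unfold contrastRatio
  push_cast
  rw [one_div, inv_mul_eq_div, div_div_eq_mul_div]
  ring

lemma contrastRatio_le {m : ℕ} {a : ℝ} {b : Fin m → ℝ} (ha : 0 < a) (hb : ∀ j, 0 < b j) :
    contrastRatio m a b ≤ (m : ℝ) + 1 := by
  rw [contrastRatio_eq]
  have hs : 0 ≤ ∑ j, b j := Finset.sum_nonneg fun j _ => (hb j).le
  have : a / (a + ∑ j, b j) ≤ 1 := by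
    rw [div_le_one (by positivity)]; linarith
  nlinarith [(Nat.cast_nonneg m : (0 : ℝ) ≤ m)]

lemma div_le_contrastRatio {m : ℕ} {a c d : ℝ} {b : Fin m → ℝ} (hc : 0 < c)
    (hca : c ≤ a) (had : a ≤ d) (hb : ∀ j, 0 < b j) (hbd : ∀ j, b j ≤ d) :
    c / d ≤ contrastRatio m a b := by
  have hs : 0 ≤ ∑ j, b j := Finset.sum_nonneg fun j _ => (hb j).le
  have hs' : ∑ j, b j ≤ m * d := by
    calc ∑ j, b j ≤ ∑ _j : Fin m, d := Finset.sum_le_sum fun j _ => hbd j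
      _ = m * d := by simp
  have ha : 0 < a := hc.trans_le hca
  have hd : 0 < d := ha.trans_le had
  rw [contrastRatio_eq, ← mul_div_assoc, div_le_div_iff₀ hd (by positivity)]
  have h1 : c * (a + ∑ j, b j) ≤ a * (a + ∑ j, b j) := by gcongr
  have h2 : a * (a + ∑ j, b j) ≤ a * (d + m * d) := by gcongr
  nlinarith

/-- Exchangeability: every softmax weight has the same mean under a power measure. -/
lemma integral_softmax_swap {Y : Type*} [MeasurableSpace Y] (ν : Measure Y)
    [IsProbabilityMeasure ν] (m : ℕ) (h : Y → ℝ) (i : Fin (m + 1)) :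
    ∫ z : Fin (m + 1) → Y, h (z i) / ∑ j, h (z j) ∂(Measure.pi fun _ => ν)
      = ∫ z : Fin (m + 1) → Y, h (z 0) / ∑ j, h (z j) ∂(Measure.pi fun _ => ν) := by
  have hmp := measurePreserving_piCongrLeft (fun _ : Fin (m + 1) => ν) (Equiv.swap 0 i)
  rw [← hmp.integral_comp' (g := fun z : Fin (m + 1) → Y => h (z i) / ∑ j, h (z j))]
  have key : ∀ (z : Fin (m + 1) → Y) (j : Fin (m + 1)),
      (MeasurableEquiv.piCongrLeft (fun _ : Fin (m + 1) => Y) (Equiv.swap 0 i)) z j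
        = z (Equiv.swap 0 i j) := by
    intro z j
    have := Equiv.piCongrLeft_apply_apply (fun _ : Fin (m + 1) => Y) (Equiv.swap 0 i) z
      (Equiv.swap 0 i j)
    rw [Equiv.swap_apply_self] at this
    exact this
  congr 1
  funext z
  simp only [key, Equiv.swap_apply_right]
  rw [Equiv.sum_comp (Equiv.swap 0 i) fun j => h (z j)]

lemma integral_contrastRatio {Y : Type*} [MeasurableSpace Y] (ν : Measure Y)
    [IsProbabilityMeasure ν] (m : ℕ) (h : Y → ℝ) (hm : Measurable h) (hpos : ∀ y, 0 < h y) :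
    ∫ y, (∫ w, contrastRatio m (h y) (fun j => h (w j)) ∂(Measure.pi fun _ : Fin m => ν)) ∂ν
      = 1 := by
  have hsum : ∀ z : Fin (m + 1) → Y, 0 < ∑ j, h (z j) := fun z =>
    Finset.sum_pos (fun j _ => hpos _) Finset.univ_nonempty
  have hsoft : ∀ i : Fin (m + 1), Integrable (fun z : Fin (m + 1) → Y => h (z i) / ∑ j, h (z j))
      (Measure.pi fun _ => ν) := by
    intro i
    refine Integrable.of_bound (C := 1) (Measurable.aestronglyMeasurable (by fun_prop))
      (ae_of_all _ fun z => ?_)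
    rw [Real.norm_of_nonneg (div_nonneg (hpos _).le (hsum z).le), div_le_one (hsum z)]
    exact Finset.single_le_sum (f := fun j => h (z j)) (fun j _ => (hpos _).le)
      (Finset.mem_univ i)
  have htot : ((m : ℝ) + 1) *
      ∫ z : Fin (m + 1) → Y, h (z 0) / ∑ j, h (z j) ∂(Measure.pi fun _ => ν) = 1 := by
    calc _ = ∑ i : Fin (m + 1),
          ∫ z : Fin (m + 1) → Y, h (z i) / ∑ j, h (z j) ∂(Measure.pi fun _ => ν) := by
          simp [integral_softmax_swap ν m h]
      _ = ∫ z : Fin (m + 1) → Y, ∑ i, h (z i) / ∑ j, h (z j) ∂(Measure.pi fun _ => ν) :=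
          (integral_finsetSum _ fun i _ => hsoft i).symm
      _ = ∫ z : Fin (m + 1) → Y, 1 ∂(Measure.pi fun _ => ν) := by
          congr 1
          funext z
          rw [← Finset.sum_div, div_self (hsum z).ne']
      _ = 1 := by simp
  have hmp := (measurePreserving_piFinSuccAbove (fun _ : Fin (m + 1) => ν) 0)
  have hcomp := hmp.integral_comp'
    (g := fun q : Y × (Fin m → Y) => contrastRatio m (h q.1) (fun j => h (q.2 j)))
  have heq : ∀ z : Fin (m + 1) → Y,
      contrastRatio m (h (MeasurableEquiv.piFinSuccAbove (fun _ => Y) 0 z).1)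
        (fun j => h ((MeasurableEquiv.piFinSuccAbove (fun _ => Y) 0 z).2 j))
        = ((m : ℝ) + 1) * (h (z 0) / ∑ j, h (z j)) := by
    intro z
    rw [contrastRatio_eq, Fin.sum_univ_succ]
    rfl
  have hintp : Integrable
      (fun q : Y × (Fin m → Y) => contrastRatio m (h q.1) (fun j => h (q.2 j)))
      (ν.prod (Measure.pi fun _ : Fin m => ν)) := by
    refine (hmp.integrable_comp_emb (MeasurableEquiv.measurableEmbedding _)).1 ?_
    exact ((hsoft 0).const_mul ((m : ℝ) + 1)).congr (ae_of_all _ fun z => (heq z).symm)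
  rw [← integral_prod _ hintp, ← htot, ← integral_const_mul]
  refine hcomp.symm.trans ?_
  congr 1
  funext z
  exact heq z

/-- The Donsker–Varadhan inequality: nonnegativity of the divergence of `P` from the
tilted measure `Q.tilted G`. -/
lemma integral_le_integral_llr_add_log {α : Type*} [MeasurableSpace α] (P Q : Measure α)
    [IsProbabilityMeasure P] [IsProbabilityMeasure Q] (hac : P ≪ Q)
    (hllr : Integrable (llr P Q) P) (G : α → ℝ) (hGP : Integrable G P)
    (hGQ : Integrable (fun a => Real.exp (G a)) Q) :
    ∫ a, G a ∂P ≤ ∫ a, llr P Q a ∂P + Real.log (∫ a, Real.exp (G a) ∂Q) := by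
  have := isProbabilityMeasure_tilted hGQ
  have h1 := InformationTheory.integral_llr_add_sub_measure_univ_nonneg
    (hac.trans (absolutelyContinuous_tilted hGQ)) (integrable_llr_tilted_right hac hGP hllr hGQ)
  rw [integral_llr_tilted_right hac hGP hGQ hllr] at h1
  simp only [probReal_univ] at h1
  linarith

/-- Lemma A.4 in the product-measure case: the finite-sample InfoNCE-type contrastive
objective lower-bounds the KL divergence from `P` to the product measure `ρ ⊗ ν`. -/
theorem stmt_3 {X Y : Type*} [MeasurableSpace X] [MeasurableSpace Y]
    (P : Measure (X × Y)) [IsProbabilityMeasure P]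
    (ρ : Measure X) [IsProbabilityMeasure ρ] (ν : Measure Y) [IsProbabilityMeasure ν]
    (n : ℕ) (hn : 1 ≤ n)
    (f : X × Y → ℝ) (hf : Measurable f) (hb : ∃ C, ∀ p, |f p| ≤ C) :
    ENNReal.ofReal
      (∫ p, (∫ w, Real.log (Real.exp (f (p.1, p.2)) /
          (((1 : ℝ) / n) *
            (Real.exp (f (p.1, p.2)) + ∑ j : Fin (n - 1), Real.exp (f (p.1, w j)))))
        ∂(Measure.pi (fun _ : Fin (n - 1) => ν))) ∂P)
      ≤ klDiv P (ρ.prod ν) := by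
  unfold klDiv
  split_ifs with hP
  swap
  · exact le_top
  obtain ⟨hac, hllr⟩ := hP
  apply ENNReal.ofReal_le_ofReal
  obtain ⟨m, rfl⟩ : ∃ m, n = m + 1 := ⟨n - 1, by omega⟩
  obtain ⟨C, hC⟩ := hb
  set π : Measure (Fin m → Y) := Measure.pi (fun _ : Fin m => ν) with hπ
  let r : (X × Y) → (Fin m → Y) → ℝ := fun p w =>
    contrastRatio m (Real.exp (f (p.1, p.2))) (fun j => Real.exp (f (p.1, w j)))
  change ∫ p, (∫ w, Real.log (r p w) ∂π) ∂P ≤ _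
  have hrm : Measurable (Function.uncurry r) := by
    simp only [r, Function.uncurry_def, contrastRatio]
    fun_prop
  have hrw : ∀ p, Measurable (r p) := fun p => hrm.comp measurable_prodMk_left
  have hlo : ∀ p w, Real.exp (-C) / Real.exp C ≤ r p w := fun p w =>
    div_le_contrastRatio (Real.exp_pos _) (Real.exp_le_exp.2 (neg_le_of_abs_le (hC _)))
      (Real.exp_le_exp.2 (le_of_abs_le (hC _))) (fun _ => Real.exp_pos _)
      (fun _ => Real.exp_le_exp.2 (le_of_abs_le (hC _)))
  have hup : ∀ p w, r p w ≤ (m : ℝ) + 1 := fun p w =>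
    contrastRatio_le (Real.exp_pos _) (fun _ => Real.exp_pos _)
  have hpos : ∀ p w, 0 < r p w := fun p w => lt_of_lt_of_le (by positivity) (hlo p w)
  obtain ⟨K, hK⟩ : ∃ K, ∀ p w, ‖Real.log (r p w)‖ ≤ K := by
    refine ⟨max (-Real.log (Real.exp (-C) / Real.exp C)) (Real.log ((m : ℝ) + 1)),
      fun p w => abs_le.2 ⟨?_, ?_⟩⟩
    · have := Real.log_le_log (by positivity) (hlo p w)
      have := le_max_left (-Real.log (Real.exp (-C) / Real.exp C)) (Real.log ((m : ℝ) + 1))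
      linarith
    · exact (Real.log_le_log (hpos p w) (hup p w)).trans (le_max_right _ _)
  have hlogint : ∀ p, Integrable (fun w => Real.log (r p w)) π := fun p =>
    Integrable.of_bound (hrw p).log.aestronglyMeasurable K (ae_of_all _ (hK p))
  have hrnorm : ∀ p w, ‖r p w‖ ≤ (m : ℝ) + 1 := fun p w => by
    rw [Real.norm_of_nonneg (hpos p w).le]; exact hup p w
  have hrint : ∀ p, Integrable (r p) π := fun p =>
    Integrable.of_bound (hrw p).aestronglyMeasurable _ (ae_of_all _ (hrnorm p))
  let G : X × Y → ℝ := fun p => ∫ w, Real.log (r p w) ∂π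
  let E : X × Y → ℝ := fun p => ∫ w, r p w ∂π
  have hGm : StronglyMeasurable G :=
    StronglyMeasurable.integral_prod_right
      (f := fun p w => Real.log (r p w)) (Measurable.stronglyMeasurable hrm.log)
  have hEm : StronglyMeasurable E :=
    StronglyMeasurable.integral_prod_right (f := r) hrm.stronglyMeasurable
  have hGP : Integrable G P :=
    Integrable.of_bound hGm.aestronglyMeasurable K (ae_of_all _ fun p => by
      simpa using norm_integral_le_of_norm_le_const (μ := π) (ae_of_all _ (hK p)))
  have hEQ : Integrable E (ρ.prod ν) :=
    Integrable.of_bound hEm.aestronglyMeasurable ((m : ℝ) + 1) (ae_of_all _ fun p => by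
      simpa using norm_integral_le_of_norm_le_const (μ := π) (ae_of_all _ (hrnorm p)))
  have hexplog : ∀ p w, Real.exp (Real.log (r p w)) = r p w := fun p w =>
    Real.exp_log (hpos p w)
  have hJ : ∀ p, Real.exp (G p) ≤ E p := by
    intro p
    have := convexOn_exp.map_integral_le (μ := π) (f := fun w => Real.log (r p w))
      Real.continuous_exp.continuousOn isClosed_univ (ae_of_all _ fun _ => Set.mem_univ _)
      (hlogint p) (by simpa only [Function.comp_def, hexplog] using hrint p)
    simpa only [hexplog] using this
  have hGQ : Integrable (fun p => Real.exp (G p)) (ρ.prod ν) :=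
    hEQ.mono' (Real.measurable_exp.comp hGm.measurable).aestronglyMeasurable
      (ae_of_all _ fun p => by rw [Real.norm_of_nonneg (Real.exp_pos _).le]; exact hJ p)
  have hE1 : ∫ p, E p ∂(ρ.prod ν) = 1 := by
    rw [integral_prod _ hEQ]
    have : ∀ x, ∫ y, E (x, y) ∂ν = 1 := fun x =>
      integral_contrastRatio ν m (fun y => Real.exp (f (x, y))) (by fun_prop)
        (fun _ => Real.exp_pos _)
    simp [this]
  have hle : ∫ p, Real.exp (G p) ∂(ρ.prod ν) ≤ 1 := hE1 ▸ integral_mono hGQ hEQ hJ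
  have hDV := integral_le_integral_llr_add_log P (ρ.prod ν) hac hllr G hGP hGQ
  have hlog := Real.log_nonpos (integral_nonneg fun p => (Real.exp_pos (G p)).le) hle
  change ∫ p, G p ∂P ≤ _
  linarith
end

section
/- Let X and Y be measurable spaces with Y standard Borel. Let P and Q be probability measures on X × Y, and let λ : Kernel X Y be a Markov kernel disintegrating Q, i.e., Q = (Q.map Prod.fst) ⊗ₘ λ (Measure.compProd of the first marginal of Q with λ). Let n ≥ 1 and let f : X × Y → ℝ be measurable and bounded. Then ENNReal.ofReal ( ∫ (x, y) ∂P, ∫ w ∂(Measure.pi (fun _ : Fin (n-1) => λ x)), Real.log ( Real.exp (f (x, y)) / ((1/n) * (Real.exp (f (x, y)) + ∑ j : Fin (n-1), Real.exp (f (x, w j)))) ) ) ≤ KL(P‖Q). -/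
/-!
Write `r(x, y, w)` for the ratio inside the logarithm, `G(x, y)` for the average of `log r` over
the negatives `w`, and `H(x, y)` for the average of `r` over `w`. For every real `t`,
`log u ≤ u - 1` at `u = exp (-t) * r`, averaged over `w`, gives `G - t ≤ exp (-t) * H - 1`. With
`t = llr P Q` and integrated against `P`, this yields
`∫ G ∂P - KL(P‖Q) ≤ ∫ (dQ/dP) * H ∂P - 1 ≤ ∫ H ∂Q - 1` (`integral_le_integral_llr`).

It remains to see that `∫ H ∂Q = 1`. Under `Q`, conditionally on `x`, the point `y` and the
negatives are i.i.d. with law `lam x`; by exchangeability each of the `n` normalized weights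
`exp (f (x, y_i)) / ∑ k, exp (f (x, y_k))` has the same mean, hence mean `1 / n`
(`integral_softmaxRatio`). Boundedness of `f` makes every integral involved a genuine one.
-/

open MeasureTheory ProbabilityTheory
open scoped ENNReal

/-- The kernel `x ↦ (κ x)^{⊗ ι}` drawing an i.i.d. family of samples from `κ x`. -/
noncomputable def iidKernel {X Y : Type*} [MeasurableSpace X] [MeasurableSpace Y]
    (ι : Type*) [Fintype ι] (κ : Kernel X Y) [IsMarkovKernel κ] : Kernel X (ι → Y) where
  toFun x := Measure.pi fun _ => κ x
  measurable' := by
    refine Measurable.measure_of_isPiSystem_of_isProbabilityMeasure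
      generateFrom_pi.symm isPiSystem_pi ?_
    rintro _ ⟨s, hs, rfl⟩
    simp only [Measure.pi_pi]
    exact Finset.measurable_prod _ fun i _ => κ.measurable_coe (hs i (Set.mem_univ i))

instance {X Y : Type*} [MeasurableSpace X] [MeasurableSpace Y] (ι : Type*) [Fintype ι]
    (κ : Kernel X Y) [IsMarkovKernel κ] : IsMarkovKernel (iidKernel ι κ) :=
  ⟨fun x => inferInstanceAs (IsProbabilityMeasure (Measure.pi fun _ => κ x))⟩

/-- The softmax weight of the positive sample `y` against the negatives `w`, in units of the
uniform weight `1 / (m + 1)`, when the scores are the exponentials of `g`. -/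
noncomputable def softmaxRatio {Y : Type*} {m : ℕ} (g : Y → ℝ) (y : Y) (w : Fin m → Y) : ℝ :=
  Real.exp (g y) /
    (((1 : ℝ) / (m + 1 : ℕ)) * (Real.exp (g y) + ∑ j : Fin m, Real.exp (g (w j))))

lemma softmaxRatio_pos {Y : Type*} {m : ℕ} (g : Y → ℝ) (y : Y) (w : Fin m → Y) :
    0 < softmaxRatio g y w := by
  unfold softmaxRatio
  positivity

lemma softmaxRatio_le {Y : Type*} {m : ℕ} (g : Y → ℝ) (y : Y) (w : Fin m → Y) :
    softmaxRatio g y w ≤ (m + 1 : ℕ) := by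
  unfold softmaxRatio
  have h : 0 ≤ ∑ j : Fin m, Real.exp (g (w j)) := by positivity
  rw [div_le_iff₀ (by positivity), ← mul_assoc, mul_one_div_cancel (by positivity), one_mul]
  linarith

lemma exp_le_softmaxRatio {Y : Type*} {m : ℕ} {g : Y → ℝ} {C : ℝ} (hg : ∀ y, |g y| ≤ C)
    (y : Y) (w : Fin m → Y) : Real.exp (-(2 * C)) ≤ softmaxRatio g y w := by
  unfold softmaxRatio
  have hle : ∀ z, Real.exp (g z) ≤ Real.exp C := fun z =>
    Real.exp_le_exp.2 ((le_abs_self _).trans (hg z))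
  have hsum : ∑ j : Fin m, Real.exp (g (w j)) ≤ m * Real.exp C := by
    simpa using Finset.sum_le_sum fun j (_ : j ∈ Finset.univ) => hle (w j)
  have hden : (1 : ℝ) / (m + 1 : ℕ) * (Real.exp (g y) + ∑ j : Fin m, Real.exp (g (w j)))
      ≤ Real.exp C := by
    rw [one_div, inv_mul_le_iff₀ (by positivity)]
    push_cast
    linarith [hle y]
  rw [le_div_iff₀ (by positivity)]
  calc _ ≤ Real.exp (-(2 * C)) * Real.exp C := by gcongr
    _ = Real.exp (-C) := by rw [← Real.exp_add]; ring_nf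
    _ ≤ Real.exp (g y) := Real.exp_le_exp.2 (neg_le_of_abs_le (hg y))

lemma abs_log_softmaxRatio_le {Y : Type*} {m : ℕ} {g : Y → ℝ} {C : ℝ} (hg : ∀ y, |g y| ≤ C)
    (y : Y) (w : Fin m → Y) :
    |Real.log (softmaxRatio g y w)| ≤ max (2 * C) (Real.log (m + 1 : ℕ)) := by
  have h1 : -(2 * C) ≤ Real.log (softmaxRatio g y w) := by
    rw [Real.le_log_iff_exp_le (softmaxRatio_pos g y w)]
    exact exp_le_softmaxRatio hg y w
  have h2 := Real.log_le_log (softmaxRatio_pos g y w) (softmaxRatio_le g y w)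
  rw [abs_le]
  constructor
  · linarith [le_max_left (2 * C) (Real.log (m + 1 : ℕ))]
  · exact h2.trans (le_max_right _ _)

/-- Exchangeability: when the positive sample has the same law as the negatives, each of the
`m + 1` samples receives the same expected softmax weight, and the weights sum to one. -/
lemma integral_softmaxRatio {Y : Type*} [MeasurableSpace Y] (ν : Measure Y)
    [IsProbabilityMeasure ν] {m : ℕ} {g : Y → ℝ} (hg : Measurable g) :
    ∫ y, ∫ w, softmaxRatio g y w ∂(Measure.pi fun _ : Fin m => ν) ∂ν = 1 := by
  set a : Y → ℝ := fun y => Real.exp (g y) with ha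
  have ham : Measurable a := by fun_prop
  set s : (Fin (m + 1) → Y) → ℝ := fun z => ∑ k, a (z k) with hs
  have hspos : ∀ z, 0 < s z := fun z =>
    Finset.sum_pos (fun k _ => Real.exp_pos _) Finset.univ_nonempty
  have hterm : ∀ i : Fin (m + 1),
      Integrable (fun z => a (z i) / s z) (Measure.pi fun _ : Fin (m + 1) => ν) := by
    intro i
    refine Integrable.of_bound (C := 1)
      (Measurable.aestronglyMeasurable (by fun_prop)) (ae_of_all _ fun z => ?_)
    rw [Real.norm_of_nonneg (div_nonneg (Real.exp_pos _).le (hspos z).le),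
      div_le_one (hspos z)]
    exact Finset.single_le_sum (f := fun k => a (z k)) (fun k _ => (Real.exp_pos _).le)
      (Finset.mem_univ i)
  have hint : Integrable
      (fun q : Y × (Fin m → Y) => softmaxRatio g q.1 q.2)
      (ν.prod (Measure.pi fun _ : Fin m => ν)) := by
    refine Integrable.of_bound (C := (m + 1 : ℕ))
      (Measurable.aestronglyMeasurable (by unfold softmaxRatio; fun_prop))
      (ae_of_all _ fun q => ?_)
    rw [Real.norm_of_nonneg (softmaxRatio_pos g _ _).le]
    exact softmaxRatio_le g _ _
  -- Placing the positive sample at position `i` among the negatives leaves the law unchanged.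
  have hi : ∀ i : Fin (m + 1),
      ∫ z, a (z i) / s z ∂(Measure.pi fun _ : Fin (m + 1) => ν) =
        ((m + 1 : ℕ) : ℝ)⁻¹ *
          ∫ y, ∫ w, softmaxRatio g y w ∂(Measure.pi fun _ : Fin m => ν) ∂ν := by
    intro i
    rw [← integral_prod (fun q : Y × (Fin m → Y) => softmaxRatio g q.1 q.2) hint,
      ← integral_const_mul,
      ← ((measurePreserving_piFinSuccAbove (fun _ : Fin (m + 1) => ν) i).symm).integral_comp']
    refine integral_congr_ae (ae_of_all _ fun q => ?_)
    have : (m : ℝ) + 1 ≠ 0 := by positivity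
    simp [hs, ha, softmaxRatio, Fin.sum_univ_succAbove _ i, Fin.insertNthEquiv]
    field_simp
  have hsum : ∑ i, ∫ z, a (z i) / s z ∂(Measure.pi fun _ : Fin (m + 1) => ν) = 1 := by
    rw [← integral_finsetSum _ fun i _ => hterm i]
    have : ∀ z, ∑ i, a (z i) / s z = 1 := fun z => by
      rw [← Finset.sum_div]
      exact div_self (hspos z).ne'
    simp [this]
  simp_rw [hi] at hsum
  have hm : ((m + 1 : ℕ) : ℝ) ≠ 0 := by positivity
  rw [Finset.sum_const, Finset.card_univ, Fintype.card_fin, nsmul_eq_mul, ← mul_assoc,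
    mul_inv_cancel₀ hm, one_mul] at hsum
  exact hsum

/-- The change of measure bound behind the Donsker–Varadhan inequality. The hypothesis `hGH` is
a linearized form of `exp (G p) ≤ H p`: it is what `log u ≤ u - 1` gives when `G` is an average
of logarithms of random variables whose average is `H`. -/
lemma integral_le_integral_llr {α : Type*} [MeasurableSpace α] {P Q : Measure α}
    [IsProbabilityMeasure P] [IsProbabilityMeasure Q] (hPQ : P ≪ Q)
    (hllr : Integrable (llr P Q) P) {G H : α → ℝ} {B : ℝ} (hG : Integrable G P)
    (hH : Measurable H) (hH0 : ∀ p, 0 ≤ H p) (hHB : ∀ p, H p ≤ B) (hHQ : ∫ p, H p ∂Q ≤ 1)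
    (hGH : ∀ p t, G p - t ≤ Real.exp (-t) * H p - 1) :
    ∫ p, G p ∂P ≤ ∫ p, llr P Q p ∂P := by
  have hHintQ : Integrable H Q := Integrable.of_bound hH.aestronglyMeasurable B
    (ae_of_all _ fun p => by rw [Real.norm_of_nonneg (hH0 p)]; exact hHB p)
  have hint : Integrable (fun p => (Q.rnDeriv P p).toReal * H p) P :=
    Measure.integrable_toReal_rnDeriv.mul_bdd (c := B) hH.aestronglyMeasurable
      (ae_of_all _ fun p => by rw [Real.norm_of_nonneg (hH0 p)]; exact hHB p)
  have hle : ∫ p, (Q.rnDeriv P p).toReal * H p ∂P ≤ 1 := by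
    have h := integral_withDensity_eq_integral_toReal_smul (Measure.measurable_rnDeriv Q P)
      (Measure.rnDeriv_lt_top Q P) H
    simp only [smul_eq_mul] at h
    rw [← h]
    exact (integral_mono_measure (Measure.withDensity_rnDeriv_le Q P)
      (ae_of_all _ hH0) hHintQ).trans hHQ
  have key : ∫ p, (G p - llr P Q p) ∂P ≤ ∫ p, ((Q.rnDeriv P p).toReal * H p - 1) ∂P := by
    refine integral_mono_ae (hG.sub hllr) (hint.sub (integrable_const 1)) ?_
    filter_upwards [exp_neg_llr hPQ] with p hp
    rw [← hp]
    exact hGH p _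
  rw [integral_sub hG hllr, integral_sub hint (integrable_const 1)] at key
  simp at key
  linarith

/-- Lemma A.4 in general form: negatives are drawn i.i.d. from the conditional
distribution (disintegration kernel) of `Q` given the first coordinate. -/
theorem stmt_4 {X Y : Type*} [MeasurableSpace X] [MeasurableSpace Y] [StandardBorelSpace Y]
    (P Q : Measure (X × Y)) [IsProbabilityMeasure P] [IsProbabilityMeasure Q]
    (lam : Kernel X Y) [IsMarkovKernel lam]
    (hdis : Q = (Q.map Prod.fst) ⊗ₘ lam)
    (n : ℕ) (hn : 1 ≤ n)
    (f : X × Y → ℝ) (hf : Measurable f) (hb : ∃ C, ∀ p, |f p| ≤ C) :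
    ENNReal.ofReal
      (∫ p, (∫ w, Real.log (Real.exp (f (p.1, p.2)) /
          (((1 : ℝ) / n) *
            (Real.exp (f (p.1, p.2)) + ∑ j : Fin (n - 1), Real.exp (f (p.1, w j)))))
        ∂(Measure.pi (fun _ : Fin (n - 1) => lam p.1))) ∂P)
      ≤ klDiv P Q := by
  obtain ⟨C, hC⟩ := hb
  obtain ⟨m, rfl⟩ : ∃ m, n = m + 1 := ⟨n - 1, by omega⟩
  unfold klDiv
  split_ifs with h
  swap
  · exact le_top
  obtain ⟨hPQ, hllr⟩ := h
  refine ENNReal.ofReal_le_ofReal ?_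
  -- `Fin (m + 1 - 1)` and `Fin m` agree definitionally.
  change ∫ p, (∫ w, Real.log (softmaxRatio (fun y => f (p.1, y)) p.2 w)
    ∂(iidKernel (Fin m) lam p.1)) ∂P ≤ _
  have hCx : ∀ x y, |f (x, y)| ≤ C := fun x y => hC (x, y)
  have hmeas : Measurable (fun q : (X × Y) × (Fin m → Y) =>
      softmaxRatio (fun y => f (q.1.1, y)) q.1.2 q.2) := by
    unfold softmaxRatio
    fun_prop
  have hG : StronglyMeasurable fun p : X × Y =>
      ∫ w, Real.log (softmaxRatio (fun y => f (p.1, y)) p.2 w) ∂(iidKernel (Fin m) lam p.1) :=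
    StronglyMeasurable.integral_kernel_prod_right
      (κ := (iidKernel (Fin m) lam).comap Prod.fst measurable_fst)
      (f := fun p w => Real.log (softmaxRatio (fun y => f (p.1, y)) p.2 w))
      (Real.measurable_log.comp hmeas).stronglyMeasurable
  have hH : StronglyMeasurable fun p : X × Y =>
      ∫ w, softmaxRatio (fun y => f (p.1, y)) p.2 w ∂(iidKernel (Fin m) lam p.1) :=
    StronglyMeasurable.integral_kernel_prod_right
      (κ := (iidKernel (Fin m) lam).comap Prod.fst measurable_fst)
      (f := fun p w => softmaxRatio (fun y => f (p.1, y)) p.2 w)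
      hmeas.stronglyMeasurable
  have hr : ∀ p : X × Y, Integrable (fun w => softmaxRatio (fun y => f (p.1, y)) p.2 w)
      (iidKernel (Fin m) lam p.1) := fun p =>
    Integrable.of_bound (hmeas.comp measurable_prodMk_left).aestronglyMeasurable (m + 1 : ℕ)
      (ae_of_all _ fun w => by
        rw [Real.norm_of_nonneg (softmaxRatio_pos _ _ _).le]
        exact softmaxRatio_le _ _ _)
  have hlog : ∀ p : X × Y,
      Integrable (fun w => Real.log (softmaxRatio (fun y => f (p.1, y)) p.2 w))
        (iidKernel (Fin m) lam p.1) := fun p =>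
    Integrable.of_bound
      (Real.measurable_log.comp (hmeas.comp measurable_prodMk_left)).aestronglyMeasurable _
      (ae_of_all _ fun w => abs_log_softmaxRatio_le (hCx p.1) p.2 w)
  have hH0 : ∀ p : X × Y,
      0 ≤ ∫ w, softmaxRatio (fun y => f (p.1, y)) p.2 w ∂(iidKernel (Fin m) lam p.1) :=
    fun p => integral_nonneg fun w => (softmaxRatio_pos _ _ _).le
  have hHB : ∀ p : X × Y,
      ∫ w, softmaxRatio (fun y => f (p.1, y)) p.2 w ∂(iidKernel (Fin m) lam p.1)
        ≤ (m + 1 : ℕ) := fun p => by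
    simpa using integral_mono (hr p) (integrable_const ((m + 1 : ℕ) : ℝ))
      fun w => softmaxRatio_le _ _ _
  refine integral_le_integral_llr hPQ hllr ?_ hH.measurable hH0 hHB ?_ ?_
  · refine Integrable.of_bound hG.aestronglyMeasurable
      (max (2 * C) (Real.log (m + 1 : ℕ))) (ae_of_all _ fun p => ?_)
    have hbd : ∀ w : Fin m → Y, ‖Real.log (softmaxRatio (fun y => f (p.1, y)) p.2 w)‖ ≤
        max (2 * C) (Real.log (m + 1 : ℕ)) := fun w => abs_log_softmaxRatio_le (hCx p.1) p.2 w
    simpa using norm_integral_le_of_norm_le_const (ae_of_all (iidKernel (Fin m) lam p.1) hbd)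
  · have hHint := Integrable.of_bound (μ := Q) hH.aestronglyMeasurable ((m + 1 : ℕ) : ℝ)
      (ae_of_all _ fun p => by rw [Real.norm_of_nonneg (hH0 p)]; exact hHB p)
    have : IsProbabilityMeasure (Q.map Prod.fst) :=
      Measure.isProbabilityMeasure_map measurable_fst.aemeasurable
    rw [hdis] at hHint ⊢
    rw [Measure.integral_compProd hHint]
    have hx : ∀ x, ∫ y, ∫ w, softmaxRatio (fun y => f (x, y)) y w
        ∂(iidKernel (Fin m) lam x) ∂(lam x) = 1 := fun x =>
      integral_softmaxRatio (lam x) (by fun_prop)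
    simp [hx]
  · intro p t
    have h1 : ∀ w : Fin m → Y, Real.log (softmaxRatio (fun y => f (p.1, y)) p.2 w) - t ≤
        Real.exp (-t) * softmaxRatio (fun y => f (p.1, y)) p.2 w - 1 := fun w => by
      have hpos := softmaxRatio_pos (fun y => f (p.1, y)) p.2 w
      have := Real.log_le_sub_one_of_pos (mul_pos (Real.exp_pos (-t)) hpos)
      rw [Real.log_mul (Real.exp_pos _).ne' hpos.ne', Real.log_exp] at this
      linarith
    have h2 := integral_mono ((hlog p).sub (integrable_const t))
      (((hr p).const_mul (Real.exp (-t))).sub (integrable_const 1)) h1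
    simp only [Pi.sub_apply] at h2
    rw [integral_sub (hlog p) (integrable_const t),
      integral_sub ((hr p).const_mul _) (integrable_const 1), integral_const_mul] at h2
    simpa using h2
end

section
/- Let Z be a measurable space and X, Y standard Borel spaces; let π be a probability measure on Z; let κ : Kernel Z (X × Y) be a Markov kernel and η : Kernel Z (X × Y) a Markov kernel with η z = ((κ z).map Prod.fst).prod ((κ z).map Prod.snd) for every z. Let n ≥ 1 and let f : X × Y × Z → ℝ be measurable and bounded. Then ENNReal.ofReal ( ∫ z ∂π, ∫ v ∂(Measure.pi (fun _ : Fin n => κ z)), Real.log ( Real.exp (f ((v 0).1, (v 0).2, z)) / ((1/n) * ∑ j : Fin n, Real.exp (f ((v 0).1, (v j).2, z))) ) ) ≤ ∫⁻ z, KL(κ z ‖ η z) ∂π. -/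
/-!
Fix `z`, write `P = κ z`, and let `Q` be the product of the marginals of `P`. Condition on the
contrasts `w = (v₁, …, vₙ₋₁)`: as a function of the positive pair `v₀`, the integrand is a bounded
test function `g_w`, and the Donsker–Varadhan inequality in its linearised form,
`∫ g dP ≤ ∫ llr P Q dP + ∫ exp g dQ - 1`, applies to it. Averaging over `w`, it remains to see that
`exp g_w` has mean one under `Q ⊗ Pⁿ⁻¹`. There the anchor `x` is independent of all `n` second
coordinates, which are exchangeable, so the softmax weight of each of the `n` candidates has the
same mean; the weights sum to `1`, and `exp g_w` is `n` times one of them. Integrating the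
resulting pointwise inequality over `z` gives the theorem.
-/


open MeasureTheory ProbabilityTheory
open scoped ENNReal

/-- `n` times the softmax weight of the candidate `(v i).2` against the anchor `x`. -/
noncomputable def infoRatio {X Y : Type*} {n : ℕ} (f : X × Y → ℝ) (i : Fin n) (x : X)
    (v : Fin n → X × Y) : ℝ :=
  Real.exp (f (x, (v i).2)) / (((1 : ℝ) / n) * ∑ j : Fin n, Real.exp (f (x, (v j).2)))

section Ratio

variable {X Y : Type*} {n : ℕ} {f : X × Y → ℝ}

lemma infoRatio_denom_pos (i : Fin n) (x : X) (v : Fin n → X × Y) :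
    0 < ((1 : ℝ) / n) * ∑ j : Fin n, Real.exp (f (x, (v j).2)) := by
  have hn : 0 < n := i.pos
  have : 0 < ∑ j : Fin n, Real.exp (f (x, (v j).2)) :=
    Finset.sum_pos (fun j _ => Real.exp_pos _) ⟨i, Finset.mem_univ i⟩
  positivity

lemma infoRatio_pos (i : Fin n) (x : X) (v : Fin n → X × Y) : 0 < infoRatio f i x v :=
  div_pos (Real.exp_pos _) (infoRatio_denom_pos i x v)

lemma sum_infoRatio (hn : 0 < n) (x : X) (v : Fin n → X × Y) :
    ∑ i, infoRatio f i x v = n := by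
  have hd := infoRatio_denom_pos (f := f) ⟨0, hn⟩ x v
  have hn' : (0 : ℝ) < n := by exact_mod_cast hn
  unfold infoRatio
  rw [← Finset.sum_div, div_eq_iff hd.ne']
  field_simp

lemma infoRatio_le (i : Fin n) (x : X) (v : Fin n → X × Y) : infoRatio f i x v ≤ n := by
  rw [← sum_infoRatio (f := f) i.pos x v]
  exact Finset.single_le_sum (f := fun j => infoRatio f j x v)
    (fun j _ => (infoRatio_pos j x v).le) (Finset.mem_univ i)

lemma abs_log_infoRatio_le {C : ℝ} (hb : ∀ p, |f p| ≤ C) (i : Fin n) (x : X)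
    (v : Fin n → X × Y) : |Real.log (infoRatio f i x v)| ≤ 2 * C := by
  have hn : (0 : ℝ) < n := by exact_mod_cast i.pos
  have hd := infoRatio_denom_pos (f := f) i x v
  have hup : ((1 : ℝ) / n) * ∑ j : Fin n, Real.exp (f (x, (v j).2)) ≤ Real.exp C := by
    have : ∑ j : Fin n, Real.exp (f (x, (v j).2)) ≤ ∑ _j : Fin n, Real.exp C :=
      Finset.sum_le_sum fun j _ => Real.exp_le_exp.2 (abs_le.1 (hb _)).2
    simp only [Finset.sum_const, Finset.card_univ, Fintype.card_fin, nsmul_eq_mul] at this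
    rw [one_div, inv_mul_le_iff₀ hn]
    exact this
  have hlo : Real.exp (-C) ≤ ((1 : ℝ) / n) * ∑ j : Fin n, Real.exp (f (x, (v j).2)) := by
    have : ∑ _j : Fin n, Real.exp (-C) ≤ ∑ j : Fin n, Real.exp (f (x, (v j).2)) :=
      Finset.sum_le_sum fun j _ => Real.exp_le_exp.2 (abs_le.1 (hb _)).1
    simp only [Finset.sum_const, Finset.card_univ, Fintype.card_fin, nsmul_eq_mul] at this
    rw [one_div, le_inv_mul_iff₀ hn]
    exact this
  have h1 := (Real.log_le_iff_le_exp hd).2 hup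
  have h2 := (Real.le_log_iff_exp_le hd).2 hlo
  have h3 := abs_le.1 (hb (x, (v i).2))
  rw [infoRatio, Real.log_div (Real.exp_pos _).ne' hd.ne', Real.log_exp, abs_le]
  constructor <;> linarith [h3.1, h3.2]

lemma measurable_infoRatio [MeasurableSpace X] [MeasurableSpace Y] (hf : Measurable f)
    (i : Fin n) : Measurable fun q : X × (Fin n → X × Y) => infoRatio f i q.1 q.2 := by
  unfold infoRatio
  fun_prop

/-- Exchangeability: transposing the samples `0` and `i` preserves the law of the batch, so all
`n` softmax weights have the same mean `1 / n`. -/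
lemma integral_infoRatio [MeasurableSpace X] [MeasurableSpace Y] (hf : Measurable f)
    (P : Measure (X × Y)) [IsProbabilityMeasure P] (i : Fin n) (x : X) :
    ∫ v, infoRatio f i x v ∂(Measure.pi fun _ : Fin n => P) = 1 := by
  have hn : (0 : ℝ) < n := by exact_mod_cast i.pos
  have hint (j : Fin n) : Integrable (infoRatio f j x) (Measure.pi fun _ : Fin n => P) := by
    refine Integrable.of_bound (C := n)
      ((measurable_infoRatio hf j).comp measurable_prodMk_left).aestronglyMeasurable
      (ae_of_all _ fun v => ?_)
    rw [Real.norm_of_nonneg (infoRatio_pos j x v).le]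
    exact infoRatio_le j x v
  have hswap (j : Fin n) : ∫ v, infoRatio f j x v ∂(Measure.pi fun _ : Fin n => P)
      = ∫ v, infoRatio f i x v ∂(Measure.pi fun _ : Fin n => P) := by
    have hmp := measurePreserving_piCongrLeft (fun _ : Fin n => P) (Equiv.swap i j)
    rw [← hmp.integral_comp' (g := infoRatio f j x)]
    congr 1 with v
    have happ (k : Fin n) : MeasurableEquiv.piCongrLeft (fun _ : Fin n => X × Y)
        (Equiv.swap i j) v k = v (Equiv.swap i j k) := by
      have := Equiv.piCongrLeft_apply_apply (fun _ : Fin n => X × Y) (Equiv.swap i j) v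
        (Equiv.swap i j k)
      rw [Equiv.swap_apply_self] at this
      exact this
    unfold infoRatio
    simp only [happ, Equiv.swap_apply_right]
    rw [Equiv.sum_comp (Equiv.swap i j) fun k => Real.exp (f (x, (v k).2))]
  have hsum := integral_finsetSum (μ := Measure.pi fun _ : Fin n => P) Finset.univ
    fun j _ => hint j
  simp only [sum_infoRatio i.pos, hswap, integral_const, probReal_univ, one_smul,
    Finset.sum_const, Finset.card_univ, Fintype.card_fin, nsmul_eq_mul] at hsum
  field_simp at hsum
  linarith

end Ratio

/-- The Donsker–Varadhan inequality for a bounded test function, with the logarithm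
`log ∫ exp g dQ` replaced by its upper bound `∫ exp g dQ - 1`. -/
lemma integral_le_integral_llr_add {α : Type*} [MeasurableSpace α] {P Q : Measure α}
    [IsProbabilityMeasure P] [IsProbabilityMeasure Q] (hPQ : P ≪ Q)
    (hllr : Integrable (llr P Q) P) {g : α → ℝ} (hg : Measurable g) {C : ℝ}
    (hb : ∀ a, |g a| ≤ C) :
    ∫ a, g a ∂P ≤ ∫ a, llr P Q a ∂P + (∫ a, Real.exp (g a) ∂Q - 1) := by
  have hgP : Integrable g P :=
    Integrable.of_bound hg.aestronglyMeasurable C (ae_of_all _ hb)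
  have hgQ : Integrable (fun a => Real.exp (g a)) Q := by
    refine Integrable.of_bound (C := Real.exp C) (by fun_prop) (ae_of_all _ fun a => ?_)
    rw [Real.norm_of_nonneg (Real.exp_pos _).le]
    exact Real.exp_le_exp.2 (abs_le.1 (hb a)).2
  have := isProbabilityMeasure_tilted hgQ
  have h0 := InformationTheory.integral_llr_add_sub_measure_univ_nonneg
    (hPQ.trans (absolutelyContinuous_tilted hgQ))
    (integrable_llr_tilted_right hPQ hgP hllr hgQ)
  rw [integral_llr_tilted_right hPQ hgP hgQ hllr] at h0
  simp only [probReal_univ] at h0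
  have hlog := Real.log_le_sub_one_of_pos (integral_exp_pos hgQ)
  linarith

/-- For a single joint law `P`, the InfoNCE objective is at most `KL(P ‖ P_X ⊗ P_Y)`. -/
lemma ofReal_infoNCE_le_klDiv {X Y : Type*} [MeasurableSpace X] [MeasurableSpace Y]
    (P : Measure (X × Y)) [IsProbabilityMeasure P] (m : ℕ) {f : X × Y → ℝ} (hf : Measurable f)
    {C : ℝ} (hb : ∀ p, |f p| ≤ C) :
    ENNReal.ofReal (∫ v, Real.log (infoRatio f 0 (v 0).1 v)
        ∂(Measure.pi fun _ : Fin (m + 1) => P))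
      ≤ klDiv P ((P.map Prod.fst).prod (P.map Prod.snd)) := by
  have : IsProbabilityMeasure (P.map Prod.fst) :=
    Measure.isProbabilityMeasure_map measurable_fst.aemeasurable
  have : IsProbabilityMeasure (P.map Prod.snd) :=
    Measure.isProbabilityMeasure_map measurable_snd.aemeasurable
  set Q := (P.map Prod.fst).prod (P.map Prod.snd) with hQ
  unfold klDiv
  split_ifs with h
  swap
  · exact le_top
  obtain ⟨hPQ, hllr⟩ := h
  refine ENNReal.ofReal_le_ofReal ?_
  set W := Measure.pi fun _ : Fin m => P with hW
  have hmp := (measurePreserving_piFinSuccAbove (fun _ : Fin (m + 1) => P) 0).symm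
  have hsplit (F : (Fin (m + 1) → X × Y) → ℝ) :
      ∫ v, F v ∂(Measure.pi fun _ : Fin (m + 1) => P)
        = ∫ q : (X × Y) × (Fin m → X × Y), F (Fin.cons q.1 q.2) ∂(P.prod W) := by
    rw [← hmp.integral_comp' F]
    congr 1 with q
    exact congrArg F (Fin.insertNth_zero' q.1 q.2)
  have hcons : Measurable fun q : (X × Y) × (Fin m → X × Y) =>
      (Fin.cons q.1 q.2 : Fin (m + 1) → X × Y) := by
    refine measurable_pi_lambda _ fun j => ?_
    refine Fin.cases ?_ (fun k => ?_) j
    · simpa using measurable_fst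
    · exact (measurable_pi_apply k).comp measurable_snd
  have hR := measurable_infoRatio (n := m + 1) hf 0
  -- The ratio is averaged over an anchor `a.1` and a candidate `b.2` drawn independently.
  set H : ((X × Y) × (X × Y)) × (Fin m → X × Y) → ℝ := fun t =>
    infoRatio f 0 t.1.1.1 (Fin.cons t.1.2 t.2 : Fin (m + 1) → X × Y) with hH
  have hHm : Measurable H := hR.comp
    ((measurable_fst.comp (measurable_fst.comp measurable_fst)).prodMk
      (hcons.comp ((measurable_snd.comp measurable_fst).prodMk measurable_snd)))
  have hHint (μ : Measure (((X × Y) × (X × Y)) × (Fin m → X × Y))) [IsProbabilityMeasure μ] :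
      Integrable H μ := by
    refine Integrable.of_bound (C := ((m + 1 : ℕ) : ℝ)) hHm.aestronglyMeasurable
      (ae_of_all _ fun t => ?_)
    rw [Real.norm_of_nonneg (infoRatio_pos _ _ _).le]
    exact infoRatio_le _ _ _
  have hGm : Measurable fun q : (X × Y) × (Fin m → X × Y) =>
      Real.log (infoRatio f 0 q.1.1 (Fin.cons q.1 q.2 : Fin (m + 1) → X × Y)) :=
    (hR.comp ((measurable_fst.comp measurable_fst).prodMk hcons)).log
  have hGint : Integrable (fun q : (X × Y) × (Fin m → X × Y) =>
      Real.log (infoRatio f 0 q.1.1 (Fin.cons q.1 q.2 : Fin (m + 1) → X × Y))) (P.prod W) :=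
    Integrable.of_bound (C := 2 * C) hGm.aestronglyMeasurable
      (ae_of_all _ fun q => abs_log_infoRatio_le hb _ _ _)
  have hQmap : Q = (P.prod P).map (Prod.map Prod.fst Prod.snd) :=
    Measure.map_prod_map P P measurable_fst measurable_snd
  have hdv (w : Fin m → X × Y) :
      ∫ p, Real.log (infoRatio f 0 p.1 (Fin.cons p w : Fin (m + 1) → X × Y)) ∂P
        ≤ ∫ a, llr P Q a ∂P + (∫ ab, H (ab, w) ∂(P.prod P) - 1) := by
    have hgm : Measurable fun p : X × Y =>
        Real.log (infoRatio f 0 p.1 (Fin.cons p w : Fin (m + 1) → X × Y)) :=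
      hGm.comp measurable_prodMk_right
    refine (integral_le_integral_llr_add hPQ hllr hgm
      (fun p => abs_log_infoRatio_le hb _ _ _)).trans_eq ?_
    congr 2
    rw [hQmap, integral_map (by fun_prop) hgm.exp.aestronglyMeasurable]
    congr 1 with ab
    rw [Real.exp_log (infoRatio_pos _ _ _)]
    simp [hH, infoRatio, Fin.sum_univ_succ]
  have hone : ∫ w, ∫ ab, H (ab, w) ∂(P.prod P) ∂W = 1 := by
    have hassoc : ∫ t, H t ∂((P.prod P).prod W) =
        ∫ s : (X × Y) × (X × Y) × (Fin m → X × Y), H ((s.1, s.2.1), s.2.2)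
          ∂(P.prod (P.prod W)) :=
      ((MeasureTheory.measurePreserving_prodAssoc P P W).symm.integral_comp' H).symm
    rw [← integral_prod_symm _ (hHint _), hassoc, integral_prod]
    · have (a : X × Y) : ∫ q : (X × Y) × (Fin m → X × Y), H ((a, q.1), q.2) ∂(P.prod W) = 1 := by
        rw [← integral_infoRatio hf P (0 : Fin (m + 1)) a.1, hsplit]
      simp [this]
    · exact (MeasureTheory.measurePreserving_prodAssoc P P W).symm.integrable_comp_of_integrable
        (hHint _)
  have hHw : Integrable (fun w => ∫ ab, H (ab, w) ∂(P.prod P)) W :=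
    (hHint ((P.prod P).prod W)).integral_prod_right
  rw [hsplit]
  simp only [Fin.cons_zero]
  rw [integral_prod_symm _ hGint]
  refine (integral_mono hGint.integral_prod_right
    ((integrable_const _).add (hHw.sub (integrable_const 1))) hdv).trans_eq ?_
  have hsub := integral_sub hHw (integrable_const (μ := W) (1 : ℝ))
  have hadd := integral_add (integrable_const (μ := W) (∫ a, llr P Q a ∂P))
    (hHw.sub (integrable_const (μ := W) (1 : ℝ)))
  simp only [Pi.sub_apply] at hadd
  refine hadd.trans ?_
  rw [hsub, hone]
  simp

/-- Neither measurability nor integrability is needed: the Bochner integral of a non-integrable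
function is `0`. -/
lemma ofReal_integral_le_lintegral_ofReal {α : Type*} [MeasurableSpace α] (μ : Measure α)
    (φ : α → ℝ) : ENNReal.ofReal (∫ a, φ a ∂μ) ≤ ∫⁻ a, ENNReal.ofReal (φ a) ∂μ := by
  by_cases h : Integrable φ μ
  · rw [integral_eq_lintegral_pos_part_sub_lintegral_neg_part h]
    refine (ENNReal.ofReal_le_ofReal (sub_le_self _ ENNReal.toReal_nonneg)).trans ?_
    exact ENNReal.ofReal_toReal_le
  · simp [integral_undef h]

/-- Proposition 2.3: the Conditional InfoNCE (C-InfoNCE) objective lower-bounds the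
conditional mutual information `MI(X;Y|Z) = ∫⁻ z, KL(κ z ‖ η z) ∂π`. -/
theorem stmt_6 {Z X Y : Type*} [MeasurableSpace Z]
    [MeasurableSpace X] [StandardBorelSpace X] [MeasurableSpace Y] [StandardBorelSpace Y]
    (π : Measure Z) [IsProbabilityMeasure π]
    (κ η : Kernel Z (X × Y)) [IsMarkovKernel κ] [IsMarkovKernel η]
    (hη : ∀ z, η z = ((κ z).map Prod.fst).prod ((κ z).map Prod.snd))
    (n : ℕ) (hn : 1 ≤ n)
    (f : X × Y × Z → ℝ) (hf : Measurable f) (hb : ∃ C, ∀ p, |f p| ≤ C) :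
    ENNReal.ofReal
      (∫ z, (∫ v, Real.log (Real.exp (f ((v ⟨0, hn⟩).1, (v ⟨0, hn⟩).2, z)) /
          (((1 : ℝ) / n) * ∑ j : Fin n, Real.exp (f ((v ⟨0, hn⟩).1, (v j).2, z))))
        ∂(Measure.pi (fun _ : Fin n => κ z))) ∂π)
      ≤ ∫⁻ z, klDiv (κ z) (η z) ∂π := by
  obtain ⟨C, hC⟩ := hb
  refine (ofReal_integral_le_lintegral_ofReal π _).trans (lintegral_mono fun z => ?_)
  obtain ⟨m, rfl⟩ : ∃ m, n = m + 1 := ⟨n - 1, by omega⟩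
  rw [hη z]
  exact ofReal_infoNCE_le_klDiv (κ z) m (f := fun p => f (p.1, p.2, z)) (by fun_prop)
    (fun p => hC _)
end

section
/- Let Z be a measurable space and X, Y standard Borel spaces; let π be a probability measure on Z; let κ : Kernel Z (X × Y) be a Markov kernel and η : Kernel Z (X × Y) a Markov kernel with η z = ((κ z).map Prod.fst).prod ((κ z).map Prod.snd) for every z. Let λ : Kernel X Y be a Markov kernel disintegrating the mixture Q := π.bind (fun z => η z), i.e., Q = (Q.map Prod.fst) ⊗ₘ λ. Let n ≥ 1 and let f : X × Y → ℝ be measurable and bounded. Then ENNReal.ofReal ( ∫ (x, y) ∂(π.bind (fun z => κ z)), ∫ w ∂(Measure.pi (fun _ : Fin (n-1) => λ x)), Real.log ( Real.exp (f (x, y)) / ((1/n) * (Real.exp (f (x, y)) + ∑ j : Fin (n-1), Real.exp (f (x, w j)))) ) ) ≤ KL( π.bind (fun z => κ z) ‖ π.bind (fun z => η z) ). -/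
/-!
The bound is the Donsker–Varadhan inequality for the test function obtained by averaging the
InfoNCE log-score over the negatives.

Write `P`, `Q` for the two mixtures and `F (x, y) w` for the log-score of the positive `y`
against the negatives `w`, and let `g (x, y)` be the mean of `F (x, y)` under the product measure
of copies of `lam x`. The left-hand side is `∫ g ∂P`, and Donsker–Varadhan
(`integral_le_integral_llr`) reduces the claim to `∫ exp g ∂Q ≤ 1`. By Jensen's inequality,
`exp (g (x, y))` is at most the mean of `exp (F (x, y) w)`. Disintegrating `Q` along `lam`, the
sample `y, w₁, …, wₘ` is i.i.d. from `lam x` given `x`, and `exp F` is `m + 1` times the softmax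
weight of the first point of the sample. By exchangeability all softmax weights have the same
mean, and they sum to `1`, so this mean is `1 / (m + 1)` and `∫ exp F = 1`
(`integral_nceRatio_eq_one`).

The product kernel on the negatives is needed only for the measurability of `g`.
-/

open MeasureTheory ProbabilityTheory
open scoped ENNReal

/-- The InfoNCE ratio of the positive `y` against the `m` negatives `w` for the critic `h`:
`m + 1` times the softmax weight of `y` in the sample `y, w₁, …, wₘ`. -/
noncomputable def nceRatio {Y : Type*} (m : ℕ) (h : Y → ℝ) (y : Y) (w : Fin m → Y) : ℝ :=
  Real.exp (h y) / (((1 : ℝ) / (m + 1 : ℕ)) * (Real.exp (h y) + ∑ j : Fin m, Real.exp (h (w j))))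

lemma nceRatio_pos {Y : Type*} (m : ℕ) (h : Y → ℝ) (y : Y) (w : Fin m → Y) :
    0 < nceRatio m h y w := by
  unfold nceRatio; positivity

lemma nceRatio_le {Y : Type*} (m : ℕ) (h : Y → ℝ) (y : Y) (w : Fin m → Y) :
    nceRatio m h y w ≤ (m + 1 : ℕ) := by
  unfold nceRatio
  have hs : 0 ≤ ∑ j : Fin m, Real.exp (h (w j)) := by positivity
  have hm : (0 : ℝ) < (m + 1 : ℕ) := by positivity
  rw [div_le_iff₀ (by positivity), ← mul_assoc, mul_one_div_cancel hm.ne', one_mul]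
  linarith

lemma le_nceRatio {Y : Type*} (m : ℕ) (h : Y → ℝ) {C : ℝ} (hC : ∀ y, |h y| ≤ C) (y : Y)
    (w : Fin m → Y) : Real.exp (-(2 * C)) ≤ nceRatio m h y w := by
  unfold nceRatio
  have hm : (0 : ℝ) < (m + 1 : ℕ) := by positivity
  have h1 : ∀ z, Real.exp (h z) ≤ Real.exp C := fun z =>
    Real.exp_le_exp.2 (abs_le.1 (hC z)).2
  have h2 : Real.exp (-C) ≤ Real.exp (h y) := Real.exp_le_exp.2 (abs_le.1 (hC y)).1
  have hs : ∑ j : Fin m, Real.exp (h (w j)) ≤ m * Real.exp C := by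
    calc _ ≤ ∑ j : Fin m, Real.exp C := Finset.sum_le_sum fun j _ => h1 _
      _ = _ := by simp
  rw [le_div_iff₀ (by positivity)]
  calc Real.exp (-(2 * C)) * ((1 : ℝ) / (m + 1 : ℕ) *
        (Real.exp (h y) + ∑ j : Fin m, Real.exp (h (w j))))
      ≤ Real.exp (-(2 * C)) * ((1 : ℝ) / (m + 1 : ℕ) * ((m + 1 : ℕ) * Real.exp C)) := by
        gcongr
        push_cast
        linarith [h1 y]
    _ = Real.exp (-C) := by
        rw [← mul_assoc (1 / ((m + 1 : ℕ) : ℝ)), one_div_mul_cancel hm.ne', one_mul,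
          ← Real.exp_add]
        congr 1; ring
    _ ≤ _ := h2

lemma measurable_nceRatio {Y : Type*} [MeasurableSpace Y] (m : ℕ) {h : Y → ℝ}
    (hh : Measurable h) : Measurable fun q : Y × (Fin m → Y) => nceRatio m h q.1 q.2 := by
  unfold nceRatio; fun_prop

lemma integrable_nceRatio {Y : Type*} [MeasurableSpace Y] (m : ℕ) {h : Y → ℝ}
    (hh : Measurable h) (μ : Measure (Y × (Fin m → Y))) [IsFiniteMeasure μ] :
    Integrable (fun q => nceRatio m h q.1 q.2) μ := by
  refine .of_bound (measurable_nceRatio m hh).aestronglyMeasurable ((m + 1 : ℕ) : ℝ) ?_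
  refine .of_forall fun q => ?_
  rw [Real.norm_of_nonneg (nceRatio_pos ..).le]
  exact nceRatio_le ..

/-- For an i.i.d. sample of size `m + 1`, every softmax weight has mean `1 / (m + 1)`. -/
lemma integral_nceRatio_eq_one {Y : Type*} [MeasurableSpace Y] (m : ℕ) {h : Y → ℝ}
    (hh : Measurable h) (ν : Measure Y) [IsProbabilityMeasure ν] :
    ∫ y, ∫ w, nceRatio m h y w ∂(Measure.pi fun _ : Fin m => ν) ∂ν = 1 := by
  have hm : ((m + 1 : ℕ) : ℝ) ≠ 0 := by positivity
  -- singling out the `i`-th point as the positive gives the same double integral for every `i`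
  have key : ∀ i : Fin (m + 1),
      ∫ v, (m + 1 : ℕ) * (Real.exp (h (v i)) / ∑ k, Real.exp (h (v k)))
        ∂(Measure.pi fun _ : Fin (m + 1) => ν) =
      ∫ y, ∫ w, nceRatio m h y w ∂(Measure.pi fun _ : Fin m => ν) ∂ν := by
    intro i
    rw [← integral_prod (fun q : Y × (Fin m → Y) => nceRatio m h q.1 q.2)
      (integrable_nceRatio m hh _),
      ← (measurePreserving_piFinSuccAbove (fun _ : Fin (m + 1) => ν) i).integral_comp'
        (fun q : Y × (Fin m → Y) => nceRatio m h q.1 q.2)]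
    refine integral_congr_ae (.of_forall fun v => ?_)
    change _ = nceRatio m h (v i) (fun j => v (i.succAbove j))
    simp only [nceRatio, Fin.sum_univ_succAbove _ i]
    have : Real.exp (h (v i)) + ∑ j : Fin m, Real.exp (h (v (i.succAbove j))) ≠ 0 := by
      positivity
    field_simp
  have hint : ∀ i : Fin (m + 1),
      Integrable (fun v : Fin (m + 1) → Y =>
        ((m + 1 : ℕ) : ℝ) * (Real.exp (h (v i)) / ∑ k, Real.exp (h (v k))))
        (Measure.pi fun _ : Fin (m + 1) => ν) := by
    intro i
    refine Integrable.const_mul (.of_bound (C := 1) (Measurable.aestronglyMeasurable (by fun_prop))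
      (.of_forall fun v => ?_)) _
    rw [Real.norm_of_nonneg (by positivity)]
    refine div_le_one_of_le₀ ?_ (by positivity)
    exact Finset.single_le_sum (f := fun k => Real.exp (h (v k)))
      (fun k _ => (Real.exp_pos _).le) (Finset.mem_univ i)
  have hsum : ∑ i : Fin (m + 1),
      ∫ v, (m + 1 : ℕ) * (Real.exp (h (v i)) / ∑ k, Real.exp (h (v k)))
        ∂(Measure.pi fun _ : Fin (m + 1) => ν) = (m + 1 : ℕ) := by
    rw [← integral_finsetSum _ fun i _ => hint i]
    have : ∀ v : Fin (m + 1) → Y, ∑ i : Fin (m + 1),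
        ((m + 1 : ℕ) : ℝ) * (Real.exp (h (v i)) / ∑ k, Real.exp (h (v k))) = (m + 1 : ℕ) := by
      intro v
      rw [← Finset.mul_sum, ← Finset.sum_div, div_self, mul_one]
      exact (Finset.sum_pos (fun k _ => Real.exp_pos _) Finset.univ_nonempty).ne'
    simp only [this, integral_const, probReal_univ, one_smul]
  rw [Finset.sum_congr rfl fun i _ => key i] at hsum
  simp only [Finset.sum_const, Finset.card_univ, Fintype.card_fin, nsmul_eq_mul] at hsum
  exact mul_left_cancel₀ hm (by rw [hsum, mul_one])

/-- Donsker–Varadhan inequality: Gibbs' inequality for `P` against `Q` tilted by `g`. -/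
lemma integral_le_integral_llr_s8 {α : Type*} [MeasurableSpace α] {P Q : Measure α}
    [IsProbabilityMeasure P] [IsProbabilityMeasure Q] (hPQ : P ≪ Q)
    (hint : Integrable (llr P Q) P) {g : α → ℝ} (hgP : Integrable g P)
    (hgQ : Integrable (fun a => Real.exp (g a)) Q) (h1 : ∫ a, Real.exp (g a) ∂Q ≤ 1) :
    ∫ a, g a ∂P ≤ ∫ a, llr P Q a ∂P := by
  have hprob : IsProbabilityMeasure (Q.tilted g) := isProbabilityMeasure_tilted hgQ
  have h0 := InformationTheory.integral_llr_add_sub_measure_univ_nonneg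
    (hPQ.trans (absolutelyContinuous_tilted hgQ))
    (integrable_llr_tilted_right hPQ hgP hint hgQ)
  rw [integral_llr_tilted_right hPQ hgP hgQ hint] at h0
  have hlog : Real.log (∫ a, Real.exp (g a) ∂Q) ≤ 0 :=
    Real.log_nonpos (integral_nonneg fun a => (Real.exp_pos _).le) h1
  simp at h0
  linarith

/-- The kernel `x ↦ (lam x)^⊗m` drawing `m` i.i.d. negatives given `x`. -/
noncomputable def powKernel {X Y : Type*} [MeasurableSpace X] [MeasurableSpace Y]
    (lam : Kernel X Y) [IsMarkovKernel lam] (m : ℕ) : Kernel X (Fin m → Y) where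
  toFun x := Measure.pi fun _ => lam x
  measurable' := by
    refine Measurable.measure_of_isPiSystem_of_isProbabilityMeasure generateFrom_pi.symm
      isPiSystem_pi ?_
    rintro _ ⟨s, hs, rfl⟩
    simp only [Measure.pi_pi]
    exact Finset.measurable_prod _ fun i _ => lam.measurable_coe (hs i (Set.mem_univ i))

instance {X Y : Type*} [MeasurableSpace X] [MeasurableSpace Y]
    (lam : Kernel X Y) [IsMarkovKernel lam] (m : ℕ) : IsMarkovKernel (powKernel lam m) :=
  ⟨fun x => by change IsProbabilityMeasure (Measure.pi fun _ => lam x); infer_instance⟩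

/-- The InfoNCE bound with `m` negatives, for any `P` and any `Q` disintegrated by `lam`. -/
lemma infoNCE_le {X Y : Type*} [MeasurableSpace X] [MeasurableSpace Y]
    (P Q : Measure (X × Y)) [IsProbabilityMeasure P] [IsProbabilityMeasure Q]
    (lam : Kernel X Y) [IsMarkovKernel lam] (hdis : Q = (Q.map Prod.fst) ⊗ₘ lam)
    (hPQ : P ≪ Q) (hint : Integrable (llr P Q) P) (m : ℕ)
    (f : X × Y → ℝ) (hf : Measurable f) (hb : ∃ C, ∀ p, |f p| ≤ C) :
    ∫ p, ∫ w, Real.log (nceRatio m (fun y => f (p.1, y)) p.2 w)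
      ∂(Measure.pi fun _ : Fin m => lam p.1) ∂P ≤ ∫ a, llr P Q a ∂P := by
  obtain ⟨C, hC⟩ := hb
  set B : ℝ := max (2 * C) (Real.log (m + 1 : ℕ))
  have hFb : ∀ (p : X × Y) w, ‖Real.log (nceRatio m (fun y => f (p.1, y)) p.2 w)‖ ≤ B := by
    intro p w
    have hp := nceRatio_pos m (fun y => f (p.1, y)) p.2 w
    rw [Real.norm_eq_abs, abs_le]
    constructor
    · have := (Real.le_log_iff_exp_le hp).2
        (le_nceRatio m (fun y => f (p.1, y)) (fun y => hC _) p.2 w)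
      linarith [le_max_left (2 * C) (Real.log (m + 1 : ℕ))]
    · exact (Real.log_le_log hp (nceRatio_le ..)).trans (le_max_right _ _)
  have hrm : Measurable fun q : (X × Y) × (Fin m → Y) =>
      nceRatio m (fun y => f (q.1.1, y)) q.1.2 q.2 := by
    unfold nceRatio; fun_prop
  have hrm' : ∀ p : X × Y, Measurable fun w => nceRatio m (fun y => f (p.1, y)) p.2 w :=
    fun p => hrm.comp measurable_prodMk_left
  set g : X × Y → ℝ := fun p => ∫ w, Real.log (nceRatio m (fun y => f (p.1, y)) p.2 w)
      ∂(Measure.pi fun _ : Fin m => lam p.1)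
  have hgm : StronglyMeasurable g :=
    StronglyMeasurable.integral_kernel_prod_right' (κ := (powKernel lam m).comap Prod.fst
      measurable_fst) hrm.log.stronglyMeasurable
  have hgb : ∀ p, ‖g p‖ ≤ B := fun p => by
    refine (norm_integral_le_of_norm_le_const (.of_forall fun w => hFb p w)).trans ?_
    simp
  have hgP : Integrable g P := .of_bound hgm.aestronglyMeasurable B (.of_forall hgb)
  have hgQ : Integrable (fun a => Real.exp (g a)) Q := by
    refine .of_bound (Real.continuous_exp.comp_stronglyMeasurable hgm).aestronglyMeasurable
      (Real.exp B) (.of_forall fun p => ?_)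
    rw [Real.norm_of_nonneg (Real.exp_pos _).le]
    exact Real.exp_le_exp.2 ((le_abs_self _).trans (hgb p))
  refine integral_le_integral_llr_s8 hPQ hint hgP hgQ ?_
  have jensen : ∀ p : X × Y, Real.exp (g p) ≤
      ∫ w, nceRatio m (fun y => f (p.1, y)) p.2 w ∂(Measure.pi fun _ : Fin m => lam p.1) := by
    intro p
    have hexp : ∀ w, Real.exp (Real.log (nceRatio m (fun y => f (p.1, y)) p.2 w)) =
      nceRatio m (fun y => f (p.1, y)) p.2 w := fun w => Real.exp_log (nceRatio_pos ..)
    have := convexOn_exp.map_integral_le (μ := Measure.pi fun _ : Fin m => lam p.1)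
      (f := fun w => Real.log (nceRatio m (fun y => f (p.1, y)) p.2 w))
      Real.continuous_exp.continuousOn isClosed_univ (.of_forall fun _ => Set.mem_univ _)
      (.of_bound (hrm' p).log.aestronglyMeasurable B (.of_forall (hFb p)))
      (by
        simp only [Function.comp_def, hexp]
        refine .of_bound (hrm' p).aestronglyMeasurable ((m + 1 : ℕ) : ℝ) (.of_forall fun w => ?_)
        rw [Real.norm_of_nonneg (nceRatio_pos ..).le]
        exact nceRatio_le ..)
    simpa only [hexp] using this
  have inner : ∀ x, ∫ y, Real.exp (g (x, y)) ∂(lam x) ≤ 1 := by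
    intro x
    have hx : Measurable fun y => f (x, y) := hf.comp measurable_prodMk_left
    rw [← integral_nceRatio_eq_one m hx (lam x)]
    refine integral_mono_of_nonneg (.of_forall fun y => (Real.exp_pos _).le)
      (integrable_nceRatio m hx ((lam x).prod (Measure.pi fun _ => lam x))).integral_prod_left
      (.of_forall fun y => jensen (x, y))
  have : IsProbabilityMeasure (Q.map Prod.fst) :=
    Measure.isProbabilityMeasure_map measurable_fst.aemeasurable
  rw [hdis] at hgQ ⊢
  rw [Measure.integral_compProd hgQ]
  calc _ ≤ ∫ _, (1 : ℝ) ∂(Q.map Prod.fst) :=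
        integral_mono_of_nonneg
          (.of_forall fun x => integral_nonneg fun y => (Real.exp_pos _).le)
          (integrable_const _) (.of_forall inner)
    _ = 1 := by simp

/-- First inequality of Proposition 2.4: the WeaC-InfoNCE objective, with positives from
the mixture joint `π.bind κ` and negatives drawn (given `x`) i.i.d. from the
disintegration kernel of the mixture-of-products `π.bind η`, lower-bounds
Weak-MI(X;Y|Z) = `KL(π.bind κ ‖ π.bind η)`. -/
theorem stmt_8 {Z X Y : Type*} [MeasurableSpace Z]
    [MeasurableSpace X] [StandardBorelSpace X] [MeasurableSpace Y] [StandardBorelSpace Y]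
    (π : Measure Z) [IsProbabilityMeasure π]
    (κ η : Kernel Z (X × Y)) [IsMarkovKernel κ] [IsMarkovKernel η]
    (hη : ∀ z, η z = ((κ z).map Prod.fst).prod ((κ z).map Prod.snd))
    (lam : Kernel X Y) [IsMarkovKernel lam]
    (hdis : π.bind (fun z => η z) =
      ((π.bind (fun z => η z)).map Prod.fst) ⊗ₘ lam)
    (n : ℕ) (hn : 1 ≤ n)
    (f : X × Y → ℝ) (hf : Measurable f) (hb : ∃ C, ∀ p, |f p| ≤ C) :
    ENNReal.ofReal
      (∫ p, (∫ w, Real.log (Real.exp (f (p.1, p.2)) /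
          (((1 : ℝ) / n) *
            (Real.exp (f (p.1, p.2)) + ∑ j : Fin (n - 1), Real.exp (f (p.1, w j)))))
        ∂(Measure.pi (fun _ : Fin (n - 1) => lam p.1))) ∂(π.bind (fun z => κ z)))
      ≤ klDiv (π.bind (fun z => κ z)) (π.bind (fun z => η z)) := by
  obtain ⟨m, rfl⟩ : ∃ m, n = m + 1 := ⟨n - 1, by omega⟩
  have hP : IsProbabilityMeasure (π.bind (fun z => κ z)) :=
    inferInstanceAs (IsProbabilityMeasure (π.bind κ))
  have hQ : IsProbabilityMeasure (π.bind (fun z => η z)) :=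
    inferInstanceAs (IsProbabilityMeasure (π.bind η))
  unfold klDiv
  split_ifs with h
  -- `m + 1 - 1` reduces to `m`, so the goal's integrand is `nceRatio` by definition
  · exact ENNReal.ofReal_le_ofReal (infoNCE_le _ _ lam hdis h.1 h.2 m f hf hb)
  · exact le_top
end

section
/- Let Z be a measurable space and X, Y standard Borel spaces; let π be a probability measure on Z; let κ : Kernel Z (X × Y) be a Markov kernel and η : Kernel Z (X × Y) a Markov kernel with η z = ((κ z).map Prod.fst).prod ((κ z).map Prod.snd) for every z. Then KL( π.bind (fun z => κ z) ‖ π.bind (fun z => η z) ) ≤ ∫⁻ z, KL(κ z ‖ η z) ∂π; that is, Weak-MI(X;Y|Z) ≤ MI(X;Y|Z). -/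
/-!
Let `π ⊗ₘ κ` and `π ⊗ₘ η` be the joint laws on `Z × (X × Y)`. The mixtures `π.bind κ` and `π.bind η`
are their second marginals, so the data processing inequality (`InformationTheory.klDiv_map_le`)
bounds the divergence of the mixtures by that of the joint laws. Since both joint laws have the same
first marginal `π`, the latter is at most `∫⁻ z, KL(κ z ‖ η z) ∂π` (`klDiv_compProd_le`). That bound
is trivial if the right-hand side is infinite; otherwise `κ z ≪ η z` for almost every `z`, the
kernel Radon–Nikodym derivative of `κ` with respect to `η` is a density of `π ⊗ₘ κ` with respect to
`π ⊗ₘ η` (`rnDeriv_compProd_ae_eq`), and Tonelli applied to the nonnegative integrand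
`klFun (dκ/dη)` gives equality.
-/

open MeasureTheory ProbabilityTheory
open scoped ENNReal

/-- For probability measures the mass correction `Q univ - P univ` in Mathlib's divergence
vanishes. -/
lemma klDiv_eq_informationTheory_klDiv {α : Type*} [MeasurableSpace α] (P Q : Measure α)
    [IsProbabilityMeasure P] [IsProbabilityMeasure Q] :
    klDiv P Q = InformationTheory.klDiv P Q := by
  rw [klDiv, InformationTheory.klDiv_def]
  simp

section Kernel

variable {Z W : Type*} [MeasurableSpace Z] [MeasurableSpace W]
  [MeasurableSpace.CountableOrCountablyGenerated Z W]
  (π : Measure Z) (κ η : Kernel Z W)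

lemma rnDeriv_compProd_ae_eq [IsFiniteMeasure π] [IsFiniteKernel κ] [IsFiniteKernel η]
    (h : ∀ᵐ z ∂π, κ z ≪ η z) :
    (π.compProd κ).rnDeriv (π.compProd η) =ᵐ[π.compProd η]
      fun p => Kernel.rnDeriv κ η p.1 p.2 := by
  have hm : Measurable (fun p : Z × W => Kernel.rnDeriv κ η p.1 p.2) :=
    Kernel.measurable_rnDeriv κ η
  have hwd : π.compProd κ
      = (π.compProd η).withDensity (fun p => Kernel.rnDeriv κ η p.1 p.2) := by
    ext s hs
    rw [withDensity_apply _ hs, Measure.compProd_apply hs, ← lintegral_indicator hs,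
      Measure.lintegral_compProd (hm.indicator hs)]
    refine lintegral_congr_ae ?_
    filter_upwards [h] with z hz
    have hs' : MeasurableSet (Prod.mk z ⁻¹' s) := measurable_prodMk_left hs
    rw [← Kernel.setLIntegral_rnDeriv hz hs', ← lintegral_indicator hs']
    rfl
  rw [hwd]
  exact Measure.rnDeriv_withDensity _ hm

lemma lintegral_klFun_kernel_rnDeriv [IsFiniteKernel κ] [IsFiniteKernel η] {z : Z}
    (hz : κ z ≪ η z) :
    ∫⁻ x, ENNReal.ofReal (InformationTheory.klFun (Kernel.rnDeriv κ η z x).toReal) ∂η z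
      = InformationTheory.klDiv (κ z) (η z) := by
  rw [InformationTheory.klDiv_eq_lintegral_klFun_of_ac hz]
  refine lintegral_congr_ae ?_
  filter_upwards [Kernel.rnDeriv_eq_rnDeriv_measure (κ := κ) (η := η) (a := z)] with x hx
  rw [hx]

lemma measurable_ofReal_klFun_rnDeriv :
    Measurable (fun p : Z × W =>
      ENNReal.ofReal (InformationTheory.klFun (Kernel.rnDeriv κ η p.1 p.2).toReal)) :=
  (InformationTheory.measurable_klFun.comp
    (Kernel.measurable_rnDeriv κ η).ennreal_toReal).ennreal_ofReal

lemma measurable_klDiv_kernel [IsFiniteKernel κ] [IsFiniteKernel η] :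
    Measurable (fun z => InformationTheory.klDiv (κ z) (η z)) := by
  classical
  have : (fun z => InformationTheory.klDiv (κ z) (η z)) = fun z =>
      if κ z ≪ η z then
        ∫⁻ x, ENNReal.ofReal (InformationTheory.klFun (Kernel.rnDeriv κ η z x).toReal) ∂η z
      else ∞ := by
    ext z
    split_ifs with hz
    · exact (lintegral_klFun_kernel_rnDeriv κ η hz).symm
    · exact InformationTheory.klDiv_of_not_ac hz
  rw [this]
  exact Measurable.ite (Kernel.measurableSet_absolutelyContinuous κ η)
    (measurable_ofReal_klFun_rnDeriv κ η).lintegral_kernel_prod_right' measurable_const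

lemma klDiv_compProd_le [IsFiniteMeasure π] [IsFiniteKernel κ] [IsFiniteKernel η] :
    InformationTheory.klDiv (π.compProd κ) (π.compProd η)
      ≤ ∫⁻ z, InformationTheory.klDiv (κ z) (η z) ∂π := by
  by_cases htop : ∫⁻ z, InformationTheory.klDiv (κ z) (η z) ∂π = ∞
  · simp [htop]
  -- Without measurability of the integrand a finite (lower) integral would not force a.e. finiteness.
  have hac : ∀ᵐ z ∂π, κ z ≪ η z := by
    filter_upwards [ae_lt_top (measurable_klDiv_kernel κ η) htop] with z hz
    exact (InformationTheory.klDiv_ne_top_iff.mp hz.ne).1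
  rw [InformationTheory.klDiv_eq_lintegral_klFun_of_ac
    (Measure.AbsolutelyContinuous.compProd_right hac)]
  refine le_of_eq ?_
  calc ∫⁻ p, ENNReal.ofReal (InformationTheory.klFun
          ((π.compProd κ).rnDeriv (π.compProd η) p).toReal) ∂(π.compProd η)
      = ∫⁻ p, ENNReal.ofReal (InformationTheory.klFun
          (Kernel.rnDeriv κ η p.1 p.2).toReal) ∂(π.compProd η) := by
        refine lintegral_congr_ae ?_
        filter_upwards [rnDeriv_compProd_ae_eq π κ η hac] with p hp
        rw [hp]
    _ = ∫⁻ z, ∫⁻ x, ENNReal.ofReal (InformationTheory.klFun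
          (Kernel.rnDeriv κ η z x).toReal) ∂η z ∂π :=
        Measure.lintegral_compProd (measurable_ofReal_klFun_rnDeriv κ η)
    _ = ∫⁻ z, InformationTheory.klDiv (κ z) (η z) ∂π := by
        refine lintegral_congr_ae ?_
        filter_upwards [hac] with z hz
        exact lintegral_klFun_kernel_rnDeriv κ η hz

end Kernel

/-- Proposition A.6: Weak-MI(X;Y|Z) ≤ MI(X;Y|Z). -/
theorem stmt_9 {Z X Y : Type*} [MeasurableSpace Z]
    [MeasurableSpace X] [StandardBorelSpace X] [MeasurableSpace Y] [StandardBorelSpace Y]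
    (π : Measure Z) [IsProbabilityMeasure π]
    (κ η : Kernel Z (X × Y)) [IsMarkovKernel κ] [IsMarkovKernel η]
    (hη : ∀ z, η z = ((κ z).map Prod.fst).prod ((κ z).map Prod.snd)) :
    klDiv (π.bind (fun z => κ z)) (π.bind (fun z => η z))
      ≤ ∫⁻ z, klDiv (κ z) (η z) ∂π := by
  have hκb : (π.compProd κ).map Prod.snd = π.bind (fun z => κ z) := Measure.snd_compProd π κ
  have hηb : (π.compProd η).map Prod.snd = π.bind (fun z => η z) := Measure.snd_compProd π η
  have : IsProbabilityMeasure (π.bind (fun z => κ z)) :=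
    hκb ▸ Measure.isProbabilityMeasure_map measurable_snd.aemeasurable
  have : IsProbabilityMeasure (π.bind (fun z => η z)) :=
    hηb ▸ Measure.isProbabilityMeasure_map measurable_snd.aemeasurable
  simp_rw [klDiv_eq_informationTheory_klDiv]
  rw [← hκb, ← hηb]
  exact (InformationTheory.klDiv_map_le _ _ measurable_snd).trans (klDiv_compProd_le π κ η)
end
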